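/- arXiv:0811.0364 — 2 statements merged into one kernel-verified Lean document; each statement's English description precedes it below -/
import Mathlib

section
/- Let X ⊂ ℂ be a non-separating continuum and let h : Bd(X) × [0,1] → ℂ be an isotopy with h^0 = id. If x ∈ Bd(X) is accessible from U = ℂ \ X, then for every t ∈ [0,1] the point h^t(x) is accessible from U^t, the unbounded component of ℂ \ h^t(Bd(X)). -/
open Set Metric Topology Filter

/-- A point `x` is accessible from a set `U ⊆ ℂ` if there is an arc `γ : [0,1] → ℂ`
with `γ 1 = x` and `γ([0,1)) ⊆ U`. -/
def Accessible (U : Set ℂ) (x : ℂ) : Prop :=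
  ∃ γ : ℝ → ℂ, ContinuousOn γ (Set.Icc 0 1) ∧ Set.InjOn γ (Set.Icc 0 1) ∧
    γ 1 = x ∧ γ '' Set.Ico 0 1 ⊆ U

/-- The union of the unbounded connected components of the complement of `K`;
for compact `K` this is the (unique) unbounded component of `ℂ \ K`. -/
def unbddComp (K : Set ℂ) : Set ℂ :=
  {z : ℂ | z ∈ Kᶜ ∧ ¬ Bornology.IsBounded (connectedComponentIn Kᶜ z)}

/-- Homotopy lifting for the exponential. -/
lemma log_homotopy {Y : Type*} [TopologicalSpace Y] (F : unitInterval × Y → ℂ)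
    (hF : Continuous F) (hF0 : ∀ p, F p ≠ 0) (L0 : Y → ℂ) (hL0 : Continuous L0)
    (h0 : ∀ y, Complex.exp (L0 y) = F (0, y)) :
    ∃ L1 : Y → ℂ, Continuous L1 ∧ ∀ y, Complex.exp (L1 y) = F (1, y) := by
  have cov := Complex.isCoveringMap_exp
  let H : C(unitInterval × Y, {z : ℂ // z ≠ 0}) := ⟨fun p => ⟨F p, hF0 p⟩, by fun_prop⟩
  let f : C(Y, ℂ) := ⟨L0, hL0⟩
  have H0 : ∀ y, H (0, y) = (fun z : ℂ ↦ (⟨_, z.exp_ne_zero⟩ : {z : ℂ // z ≠ 0})) (f y) := by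
    intro y
    apply Subtype.ext
    exact (h0 y).symm
  refine ⟨fun y => cov.liftHomotopy H f H0 (1, y), by fun_prop, fun y => ?_⟩
  have := congrFun (cov.liftHomotopy_lifts H f H0) (1, y)
  exact congrArg Subtype.val this

/-- There is no continuous logarithm on the exterior of a disc. -/
lemma no_log_exterior (M : ℝ) (hM : 0 < M) (lam : ℂ → ℂ)
    (hc : ContinuousOn lam {z | M ≤ ‖z‖}) (he : ∀ z, M ≤ ‖z‖ → Complex.exp (lam z) = z) :
    False := by
  let c : ℝ → ℂ := fun t => M * Complex.exp (t * Complex.I)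
  have hcn : ∀ t, ‖c t‖ = M := fun t => by
    simp [c, Complex.norm_exp_ofReal_mul_I, abs_of_pos hM]
  have hcc : Continuous c := by fun_prop
  have hlc : Continuous (fun t => lam (c t)) :=
    hc.comp_continuous hcc (fun t => (hcn t).ge)
  let g : ℝ → ℂ := fun t => lam (c t) - t * Complex.I - Real.log M
  have hg : Continuous g := (hlc.sub (by fun_prop)).sub continuous_const
  have hgi : ∀ t, Complex.exp (g t) = 1 := by
    intro t
    simp only [g]
    rw [Complex.exp_sub, Complex.exp_sub, he _ (hcn t).ge, ← Complex.ofReal_exp, Real.exp_log hM]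
    have : (M : ℂ) ≠ 0 := by exact_mod_cast hM.ne'
    have h2 := Complex.exp_ne_zero (t * Complex.I)
    simp only [c]
    field_simp
  -- g takes values in a discrete set
  have hint : ∀ t, ∃ n : ℤ, g t = n * (2 * Real.pi * Complex.I) := fun t =>
    Complex.exp_eq_one_iff.1 (hgi t)
  let k : ℝ → ℝ := fun t => (g t).im / (2 * Real.pi)
  have hk : Continuous k := by fun_prop
  have hkint : ∀ t, ∃ n : ℤ, k t = n := by
    intro t
    obtain ⟨n, hn⟩ := hint t
    refine ⟨n, ?_⟩
    simp only [k, hn]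
    have : (2 * Real.pi) ≠ 0 := by positivity
    rw [div_eq_iff this]
    simp
  have h2 : k (2 * Real.pi) = k 0 - 1 := by
    have : c (2 * Real.pi) = c 0 := by simp [c]
    simp only [k, g, this]
    have : (2 * Real.pi) ≠ 0 := by positivity
    field_simp
    simp
  have hpi := Real.pi_pos
  have hivt := intermediate_value_Icc' (f := k) (a := 0) (b := 2 * Real.pi) (by positivity)
    hk.continuousOn
  obtain ⟨t, -, ht⟩ := hivt (show k 0 - 1/2 ∈ Icc (k (2 * Real.pi)) (k 0) by
    rw [h2]; constructor <;> linarith)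
  obtain ⟨n, hn⟩ := hkint t
  obtain ⟨m, hm⟩ := hkint 0
  rw [hn, hm] at ht
  have : (2 * n : ℝ) = 2 * m - 1 := by linarith
  have : (2 * n : ℤ) = 2 * m - 1 := by exact_mod_cast this
  omega

/-- Every nonvanishing continuous function on the plane has a continuous logarithm. -/
lemma plane_log (w : ℂ → ℂ) (hw : Continuous w) (h0 : ∀ z, w z ≠ 0) :
    ∃ Λ : ℂ → ℂ, Continuous Λ ∧ ∀ z, Complex.exp (Λ z) = w z := by
  obtain ⟨L, hL, hL'⟩ := log_homotopy (Y := ℂ) (fun p => w ((p.1 : ℝ) * p.2)) (by fun_prop)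
    (fun p => h0 _) (fun _ => Complex.log (w 0)) continuous_const
    (fun y => by simp [Complex.exp_log (h0 0)])
  exact ⟨L, hL, fun z => by simpa using hL' z⟩

/-- The non-splitting lemma. -/
lemma no_split (u : ℂ → ℂ) (hu : Continuous u) (hn : ∀ z, ‖u z‖ = ‖z‖)
    (Φ : {z : ℂ // z ≠ 0} → ℝ) (hΦ : Continuous Φ)
    (huΦ : ∀ z : {z : ℂ // z ≠ 0}, u z * Complex.exp (Φ z * Complex.I) = z)
    (φ : ℂ → ℝ) (hφ : Continuous φ) (hφ0 : ∀ z, 0 ≤ φ z) (h0 : φ 0 = 1)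
    (M : ℝ) (hM : 0 < M) (hφM : ∀ z, M ≤ ‖z‖ → φ z = 0)
    (hE : ∀ z, u z = -(‖z‖ : ℂ) → φ z = 0 ∨ φ z = 1) : False := by
  let w : ℂ → ℂ := fun z => u z + ((φ z * (‖z‖ + 1) : ℝ) : ℂ)
  have hw : Continuous w := by fun_prop
  have hw0 : ∀ z, w z ≠ 0 := by
    intro z hz
    have h1 : u z = -((φ z * (‖z‖ + 1) : ℝ) : ℂ) := eq_neg_of_add_eq_zero_left hz
    have h2 : ‖z‖ = φ z * (‖z‖ + 1) := by
      have h3 := hn z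
      rw [h1, norm_neg, Complex.norm_real, Real.norm_of_nonneg
        (mul_nonneg (hφ0 z) (by positivity))] at h3
      exact h3.symm
    rw [← h2] at h1
    rcases hE z h1 with h | h
    · rw [h, zero_mul] at h2
      rw [norm_eq_zero.1 h2, h0] at h
      norm_num at h
    · rw [h] at h2; linarith
  obtain ⟨Λ, hΛ, hΛ'⟩ := plane_log w hw hw0
  classical
  refine no_log_exterior M hM
    (fun z => if h : z ≠ 0 then Λ z + Φ ⟨z, h⟩ * Complex.I else 0) ?_ ?_
  · rw [continuousOn_iff_continuous_domRestrict]
    have : ∀ z : {z : ℂ | M ≤ ‖z‖}, (z : ℂ) ≠ 0 := by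
      rintro ⟨z, hz⟩ rfl
      simp at hz; linarith
    have h4 : Continuous (fun z : {z : ℂ | M ≤ ‖z‖} => Λ z + Φ ⟨z, this z⟩ * Complex.I) := by
      fun_prop
    convert h4 using 1
    ext z
    simp [this z]
  · intro z hz
    have hz0 : z ≠ 0 := by rintro rfl; simp at hz; linarith
    simp only [ne_eq, hz0, not_false_eq_true, dite_true]
    rw [Complex.exp_add, hΛ']
    have := huΦ ⟨z, hz0⟩
    simpa [w, hφM z hz] using this

lemma exists_u (K : Set ℂ) (hK : IsClosed K) (L : {z : ℂ // z ∈ K ∧ z ≠ 0} → ℂ)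
    (hL : Continuous L) (hexp : ∀ z, Complex.exp (L z) = z) :
    ∃ (u : ℂ → ℂ) (Φ : {z : ℂ // z ≠ 0} → ℝ), Continuous u ∧ (∀ z, ‖u z‖ = ‖z‖) ∧
      Continuous Φ ∧ (∀ z : {z : ℂ // z ≠ 0}, u z * Complex.exp (Φ z * Complex.I) = z) ∧
      ∀ z ∈ K, u z = (‖z‖ : ℂ) := by
  let s : Set {z : ℂ // z ≠ 0} := {z | (z : ℂ) ∈ K}
  have hs : IsClosed s := hK.preimage continuous_subtype_val
  let f : C(s, ℝ) := ⟨fun z => (L ⟨z.1.1, z.2, z.1.2⟩).im, by fun_prop⟩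
  obtain ⟨Φ, hΦ⟩ := f.exists_restrict_eq hs
  classical
  have key : ∀ z : {z : ℂ // z ≠ 0},
      ‖(z : ℂ) * Complex.exp (-(Φ z * Complex.I))‖ = ‖(z : ℂ)‖ := by
    intro z
    rw [norm_mul, ← neg_mul, ← Complex.ofReal_neg, Complex.norm_exp_ofReal_mul_I, mul_one]
  let u : ℂ → ℂ := fun z => if h : z ≠ 0 then z * Complex.exp (-(Φ ⟨z, h⟩ * Complex.I)) else 0
  have hu : ∀ z : {z : ℂ // z ≠ 0}, u z = z * Complex.exp (-(Φ z * Complex.I)) := by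
    intro z; simp [u, z.2]
  have hun : ∀ z, ‖u z‖ = ‖z‖ := by
    intro z
    by_cases h : z = 0
    · simp [u, h]
    · exact (congrArg norm (hu ⟨z, h⟩)).trans (key ⟨z, h⟩)
  refine ⟨u, Φ, ?_, hun, Φ.continuous, ?_, ?_⟩
  · rw [continuous_iff_continuousAt]
    intro z
    by_cases h : z = 0
    · subst h
      have : u 0 = 0 := by simp [u]
      rw [ContinuousAt, this, tendsto_zero_iff_norm_tendsto_zero]
      simp only [hun]
      exact tendsto_norm_zero
    · have ho : IsOpen {z : ℂ | z ≠ 0} := isOpen_ne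
      have : ContinuousOn u {z : ℂ | z ≠ 0} := by
        rw [continuousOn_iff_continuous_domRestrict]
        have h4 : Continuous (fun z : {z : ℂ // z ≠ 0} =>
          (z : ℂ) * Complex.exp (-(Φ z * Complex.I))) := by fun_prop
        exact h4.congr (fun z => (hu z).symm)
      exact this.continuousAt (ho.mem_nhds h)
  · intro z
    rw [hu, mul_assoc, ← Complex.exp_add]; simp
  · intro z hz
    by_cases h : z = 0
    · simp [u, h]
    · have h1 := hu ⟨z, h⟩
      have h2 : Φ ⟨z, h⟩ = (L ⟨z, hz, h⟩).im := congrFun (congrArg DFunLike.coe hΦ) ⟨⟨z, h⟩, hz⟩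
      have h3 := hexp ⟨z, hz, h⟩
      simp only at h1 h3
      rw [h1, h2]
      have h4 : ‖z‖ = Real.exp (L ⟨z, hz, h⟩).re := by
        rw [← Complex.norm_exp, h3]
      rw [h4, Complex.ofReal_exp]
      nth_rewrite 1 [← h3]
      rw [← Complex.exp_add]
      congr 1
      apply Complex.ext <;> simp

lemma exists_ray {V : Type*} (G : SimpleGraph V) (S0 : Set V) (hS : S0.Finite)
    (hlf : ∀ v, (G.neighborSet v).Finite)
    (hinf : {v | ∃ s ∈ S0, G.Reachable s v}.Infinite) :
    ∃ c : ℕ → V, c 0 ∈ S0 ∧ (∀ n, G.Adj (c n) (c (n + 1))) ∧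
      (∀ i j, i + 2 ≤ j → ¬ G.Adj (c i) (c j)) ∧ Function.Injective c := by
  have h1 : ∃ s ∈ S0, {v | G.Reachable s v}.Infinite := by
    by_contra! hcon
    apply hinf
    have : {v | ∃ s ∈ S0, G.Reachable s v} = ⋃ s ∈ S0, {v | G.Reachable s v} := by
      ext v; simp
    rw [this]
    exact hS.biUnion hcon
  obtain ⟨x0, hx0, hx0inf⟩ := h1
  let R : V → V → Prop := fun x y => G.Adj x y ∧ G.dist x0 y = G.dist x0 x + 1
  let Good : V → Prop := fun x => {y | Relation.ReflTransGen R x y}.Infinite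
  have hdesc : ∀ n v, G.Reachable x0 v → G.dist x0 v = n → Relation.ReflTransGen R x0 v := by
    intro n
    induction n with
    | zero =>
      intro v hv hd
      rw [hv.dist_eq_zero_iff.1 hd]
    | succ n ih =>
      intro v hv hd
      obtain ⟨p, hp⟩ := hv.symm.exists_walk_length_eq_dist
      rw [SimpleGraph.dist_comm, hd] at hp
      cases p with
      | nil => simp at hp
      | cons hadj q =>
        rename_i w
        have hq : q.length = n := by simpa using hp
        have hle : G.dist x0 w ≤ n := by
          rw [SimpleGraph.dist_comm, ← hq]; exact SimpleGraph.dist_le q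
        have hw : G.dist x0 w = n := by
          rcases (hadj.diff_dist_adj (u := x0)) with h | h | h <;> omega
        exact (ih w q.reachable.symm hw).tail ⟨hadj.symm, by omega⟩
  have hroot : Good x0 := hx0inf.mono (fun v hv => hdesc _ v hv rfl)
  have hstep : ∀ x, Good x → ∃ y, R x y ∧ Good y := by
    intro x hx
    by_contra! hcon
    apply hx
    have : {y | Relation.ReflTransGen R x y} ⊆
        {x} ∪ ⋃ z ∈ {z | R x z}, {y | Relation.ReflTransGen R z y} := by
      intro y hy
      rcases Relation.ReflTransGen.cases_head hy with h | ⟨z, hz, hzy⟩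
      · left; exact h.symm
      · right; simp only [mem_iUnion]; exact ⟨z, hz, hzy⟩
    refine Set.Finite.subset ?_ this
    refine (finite_singleton x).union (Set.Finite.biUnion ((hlf x).subset fun z hz => hz.1) ?_)
    intro z hz
    exact not_infinite.1 (hcon z hz)
  choose! nx hnx hnx' using hstep
  let c : ℕ → V := fun n => nx^[n] x0
  have hc1 : ∀ n, c (n + 1) = nx (c n) := fun n => Function.iterate_succ_apply' nx n x0
  have hg : ∀ n, Good (c n) := by
    intro n
    induction n with
    | zero => exact hroot
    | succ n ih => rw [hc1]; exact hnx' _ ih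
  have hR : ∀ n, R (c n) (c (n + 1)) := fun n => by rw [hc1]; exact hnx _ (hg n)
  have hd : ∀ n, G.dist x0 (c n) = n := by
    intro n
    induction n with
    | zero => simp [c]
    | succ n ih => rw [(hR n).2, ih]
  refine ⟨c, hx0, fun n => (hR n).1, ?_, ?_⟩
  · intro i j hij hadj
    rcases (hadj.diff_dist_adj (u := x0)) with h | h | h <;> rw [hd, hd] at h <;> omega
  · intro i j hij
    rw [← hd i, ← hd j, hij]

lemma cross_lemma {ρ : ℂ → ℝ} {a b c d p : ℂ} (h1 : p ∈ segment ℝ a b) (h2 : p ∈ segment ℝ c d)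
    (hab : dist a b < ρ a + ρ b) (hcd : dist c d < ρ c + ρ d) :
    dist a c < ρ a + ρ c ∨ dist b d < ρ b + ρ d := by
  have e1 := dist_add_dist_of_mem_segment h1
  have e2 := dist_add_dist_of_mem_segment h2
  by_contra! hcon
  have t1 := dist_triangle a p c
  have t2 := dist_triangle b p d
  rw [dist_comm p c] at t1
  rw [dist_comm b p] at t2
  linarith [hcon.1, hcon.2]

lemma consec_aux {ρ : ℂ → ℝ} (hρ : ∀ x y, ρ x - ρ y ≤ dist x y) {a b c : ℂ} {lam : ℝ}
    (h0 : 0 ≤ lam) (h1 : lam ≤ 1) (h : a - b = lam * (c - b))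
    (hbc : dist b c < ρ b + ρ c) : dist a c < ρ a + ρ c := by
  have e1 : dist a b = lam * dist b c := by
    rw [dist_eq_norm, h, norm_mul, dist_comm, dist_eq_norm, Complex.norm_real,
      Real.norm_of_nonneg h0]
  have e2 : dist a c = (1 - lam) * dist b c := by
    have : a - c = ((1 - lam : ℝ) : ℂ) * (b - c) := by push_cast; linear_combination h
    rw [dist_eq_norm, this, norm_mul, Complex.norm_real, Real.norm_of_nonneg (by linarith),
      dist_eq_norm]
  have := hρ b a
  rw [dist_comm] at this
  nlinarith

lemma consec_lemma {ρ : ℂ → ℝ} (hρ : ∀ x y, ρ x - ρ y ≤ dist x y) {a b c p : ℂ}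
    (h1 : p ∈ segment ℝ a b) (h2 : p ∈ segment ℝ b c) (hp : p ≠ b)
    (hab : dist a b < ρ a + ρ b) (hbc : dist b c < ρ b + ρ c) :
    dist a c < ρ a + ρ c := by
  rw [segment_symm, segment_eq_image'] at h1
  rw [segment_eq_image'] at h2
  obtain ⟨s, ⟨hs0, hs1⟩, hs⟩ := h1
  obtain ⟨t, ⟨ht0, ht1⟩, ht⟩ := h2
  simp only [Complex.real_smul] at hs ht
  have hs0' : 0 < s := lt_of_le_of_ne hs0 (by rintro rfl; apply hp; rw [← hs]; simp)
  have ht0' : 0 < t := lt_of_le_of_ne ht0 (by rintro rfl; apply hp; rw [← ht]; simp)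
  have hst : (s : ℂ) * (a - b) = t * (c - b) := by linear_combination hs - ht
  have hsc : (s : ℂ) ≠ 0 := by exact_mod_cast hs0'.ne'
  have htc : (t : ℂ) ≠ 0 := by exact_mod_cast ht0'.ne'
  rcases le_total t s with h | h
  · refine consec_aux hρ (lam := t / s) (by positivity) ((div_le_one hs0').2 h) ?_ hbc
    push_cast; field_simp; linear_combination hst
  · rw [dist_comm, add_comm]
    rw [dist_comm, add_comm] at hab
    refine consec_aux hρ (lam := s / t) (by positivity) ((div_le_one ht0').2 h) ?_ hab
    push_cast; field_simp; linear_combination -hst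

/-- An infinite simple polygon converging to `0`. -/
lemma polygon_arc (c : ℕ → ℂ) (hc : Tendsto c atTop (𝓝 0)) (hne : ∀ n, c n ≠ c (n + 1))
    (hinj : ∀ i j p, i < j → p ∈ segment ℝ (c i) (c (i + 1)) →
      p ∈ segment ℝ (c j) (c (j + 1)) → j = i + 1 ∧ p = c j)
    (h0 : ∀ n, (0 : ℂ) ∉ segment ℝ (c n) (c (n + 1))) :
    ∃ γ : ℝ → ℂ, ContinuousOn γ (Icc 0 1) ∧ InjOn γ (Icc 0 1) ∧ γ 1 = 0 ∧ γ 0 = c 0 ∧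
      ∀ t ∈ Ico (0:ℝ) 1, ∃ n, γ t ∈ segment ℝ (c n) (c (n + 1)) := by
  let P : ℝ → ℂ := fun s => AffineMap.lineMap (c ⌊s⌋₊) (c (⌊s⌋₊ + 1)) (s - ⌊s⌋₊)
  have hPn : ∀ (n : ℕ) (s : ℝ), s ∈ Icc (n : ℝ) (n + 1) →
      P s = AffineMap.lineMap (c n) (c (n + 1)) (s - n) := by
    intro n s hs
    rcases hs.2.lt_or_eq with h | h
    · have : ⌊s⌋₊ = n := (Nat.floor_eq_iff (by linarith [hs.1, n.cast_nonneg (α := ℝ)])).2 ⟨hs.1, h⟩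
      simp only [P, this]
    · have : ⌊s⌋₊ = n + 1 := by rw [h]; exact_mod_cast Nat.floor_natCast (n + 1)
      simp only [P, this]
      rw [h]; simp
  have hPseg : ∀ s, 0 ≤ s → P s ∈ segment ℝ (c ⌊s⌋₊) (c (⌊s⌋₊ + 1)) := by
    intro s hs
    rw [segment_eq_image_lineMap]
    exact ⟨s - ⌊s⌋₊, ⟨by linarith [Nat.floor_le hs], by linarith [Nat.lt_floor_add_one s]⟩, rfl⟩
  have hPN : ∀ N : ℕ, ContinuousOn P (Icc 0 (N : ℝ)) := by
    intro N
    induction N with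
    | zero => simp
    | succ N ih =>
      have hN : (0 : ℝ) ≤ N := N.cast_nonneg
      have : Icc (0 : ℝ) ((N + 1 : ℕ) : ℝ) = Icc 0 (N : ℝ) ∪ Icc (N : ℝ) (N + 1) := by
        rw [Icc_union_Icc_eq_Icc hN (by linarith)]; push_cast; rfl
      rw [this]
      refine ih.union_of_isClosed ?_ isClosed_Icc isClosed_Icc
      refine ContinuousOn.congr ?_ (hPn N)
      apply Continuous.continuousOn
      exact (AffineMap.lineMap_continuous).comp (by fun_prop)
  have hPc : ContinuousOn P (Ici 0) := by
    intro s hs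
    obtain ⟨N, hN⟩ := exists_nat_gt s
    have h1 : ContinuousWithinAt P (Icc 0 (N : ℝ)) s := hPN N s ⟨hs, hN.le⟩
    refine h1.mono_of_mem_nhdsWithin ?_
    rw [← Ici_inter_Iic]
    exact inter_mem self_mem_nhdsWithin (mem_nhdsWithin_of_mem_nhds (Iic_mem_nhds hN))
  have hP0 : Tendsto P atTop (𝓝 0) := by
    have hf : Tendsto (fun s : ℝ => ⌊s⌋₊) atTop atTop := tendsto_nat_floor_atTop
    have h1 := (hc.comp hf).norm
    have h2 := (((tendsto_add_atTop_iff_nat 1).2 hc).comp hf).norm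
    have h3 := h1.add h2
    simp only [norm_zero, add_zero] at h3
    refine squeeze_zero_norm' ?_ h3
    filter_upwards [eventually_ge_atTop (0 : ℝ)] with s hs
    obtain ⟨a, b, ha, hb, hab, hs'⟩ := hPseg s hs
    rw [← hs']
    refine (norm_add_le _ _).trans ?_
    rw [norm_smul, norm_smul, Real.norm_of_nonneg ha, Real.norm_of_nonneg hb]
    simp only [Function.comp]
    have := norm_nonneg (c ⌊s⌋₊)
    have := norm_nonneg (c (⌊s⌋₊ + 1))
    nlinarith
  have hPne : ∀ s, 0 ≤ s → P s ≠ 0 := fun s hs h => h0 _ (h ▸ hPseg s hs)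
  have hPlt : ∀ s t, 0 ≤ s → s < t → P s ≠ P t := by
    intro s t hs hst heq
    have ht : 0 ≤ t := hs.trans hst.le
    rcases (Nat.floor_mono hst.le).lt_or_eq with hlt | hfl
    · obtain ⟨hj, hp⟩ := hinj _ _ (P s) hlt (hPseg s hs) (heq ▸ hPseg t ht)
      have h1 : P s = AffineMap.lineMap (c ⌊s⌋₊) (c (⌊s⌋₊ + 1)) (s - ⌊s⌋₊) := rfl
      have h2 : c ⌊t⌋₊ = AffineMap.lineMap (c ⌊s⌋₊) (c (⌊s⌋₊ + 1)) (1 : ℝ) := by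
        rw [AffineMap.lineMap_apply_one, hj]
      rw [h1, h2] at hp
      have h3 := AffineMap.lineMap_injective ℝ (hne ⌊s⌋₊) hp
      linarith [Nat.lt_floor_add_one s]
    · have h1 : P s = AffineMap.lineMap (c ⌊s⌋₊) (c (⌊s⌋₊ + 1)) (s - ⌊s⌋₊) := rfl
      have h2 : P t = AffineMap.lineMap (c ⌊s⌋₊) (c (⌊s⌋₊ + 1)) (t - ⌊s⌋₊) := by rw [hfl]
      rw [h1, h2] at heq
      have h3 := AffineMap.lineMap_injective ℝ (hne ⌊s⌋₊) heq
      linarith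
  have hPinj : ∀ s t, 0 ≤ s → 0 ≤ t → P s = P t → s = t := by
    intro s t hs ht h
    rcases lt_trichotomy s t with h1 | h1 | h1
    · exact absurd h (hPlt s t hs h1)
    · exact h1
    · exact absurd h.symm (hPlt t s ht h1)
  classical
  let γ : ℝ → ℂ := fun t => if t = 1 then 0 else P (t / (1 - t))
  have hγ1 : γ 1 = 0 := by simp [γ]
  have hγ : ∀ t ∈ Ico (0:ℝ) 1, γ t = P (t / (1 - t)) := fun t ht => by simp [γ, ht.2.ne]
  have hpos : ∀ t ∈ Ico (0:ℝ) 1, 0 ≤ t / (1 - t) := fun t ht =>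
    div_nonneg ht.1 (by linarith [ht.2])
  have hIco : ContinuousOn γ (Ico 0 1) := by
    refine ContinuousOn.congr ?_ hγ
    refine hPc.comp ?_ hpos
    refine ContinuousOn.div (by fun_prop) (by fun_prop) ?_
    intro t ht
    linarith [ht.2]
  have hat1 : Tendsto γ (𝓝[<] 1) (𝓝 0) := by
    have h1 : Tendsto (fun t : ℝ => t / (1 - t)) (𝓝[<] 1) atTop := by
      simp only [div_eq_mul_inv]
      refine Tendsto.pos_mul_atTop one_pos (tendsto_id.mono_left nhdsWithin_le_nhds) ?_
      refine tendsto_inv_nhdsGT_zero.comp ?_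
      refine tendsto_nhdsWithin_of_tendsto_nhds_of_eventually_within _ ?_ ?_
      · have : Tendsto (fun t : ℝ => 1 - t) (𝓝 1) (𝓝 (1 - 1)) := by
          apply Continuous.tendsto; fun_prop
        rw [sub_self] at this
        exact this.mono_left nhdsWithin_le_nhds
      · filter_upwards [self_mem_nhdsWithin] with t ht
        simp at ht ⊢; exact ht
    refine (hP0.comp h1).congr' ?_
    filter_upwards [self_mem_nhdsWithin] with t ht
    simp [γ, (show t < 1 from ht).ne]
  refine ⟨γ, ?_, ?_, hγ1, ?_, ?_⟩
  · intro t ht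
    rcases ht.2.lt_or_eq with h | h
    · refine (hIco t ⟨ht.1, h⟩).mono_of_mem_nhdsWithin ?_
      rw [← Ici_inter_Iio]
      exact inter_mem (mem_of_superset self_mem_nhdsWithin (fun x hx => hx.1))
        (mem_nhdsWithin_of_mem_nhds (Iio_mem_nhds h))
    · subst h
      have : Icc (0 : ℝ) 1 = insert 1 (Ico 0 1) := by
        rw [insert_eq, union_comm, Ico_union_right zero_le_one]
      rw [this, continuousWithinAt_insert_self, ContinuousWithinAt, hγ1]
      exact hat1.mono_left (nhdsWithin_mono _ (fun x hx => hx.2))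
  · intro s hs t ht h
    rcases hs.2.lt_or_eq with h1 | h1 <;> rcases ht.2.lt_or_eq with h2 | h2
    · rw [hγ s ⟨hs.1, h1⟩, hγ t ⟨ht.1, h2⟩] at h
      have := hPinj _ _ (hpos s ⟨hs.1, h1⟩) (hpos t ⟨ht.1, h2⟩) h
      have e1 : (1 - s) ≠ 0 := by linarith
      have e2 : (1 - t) ≠ 0 := by linarith
      field_simp at this
      linarith
    · rw [hγ s ⟨hs.1, h1⟩, h2, hγ1] at h
      exact absurd h (hPne _ (hpos s ⟨hs.1, h1⟩))
    · rw [hγ t ⟨ht.1, h2⟩, h1, hγ1] at h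
      exact absurd h.symm (hPne _ (hpos t ⟨ht.1, h2⟩))
    · rw [h1, h2]
  · rw [hγ 0 (by simp)]; simp [P]
  · intro t ht
    rw [hγ t ht]
    exact ⟨_, hPseg _ (hpos t ht)⟩

lemma access_of (K : Set ℂ) (a : ℂ) (R : ℝ) (hR : 0 < R) (hK : ∀ z ∈ K, ‖z - a‖ < R)
    (γ : ℝ → ℂ) (hc : ContinuousOn γ (Icc 0 1)) (hi : InjOn γ (Icc 0 1)) (h1 : γ 1 = a)
    (hU : ∀ t ∈ Ico (0:ℝ) 1, γ t ∉ K) (h0 : R ≤ ‖γ 0 - a‖) :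
    Accessible (unbddComp K) a := by
  refine ⟨γ, hc, hi, h1, ?_⟩
  rintro _ ⟨t, ht, rfl⟩
  refine ⟨hU t ht, fun hb => ?_⟩
  let A : Set ℂ := γ '' Ico 0 1
  let B : Set ℂ := (fun s : ℝ => a + s * (γ 0 - a)) '' Ici 1
  have hA : IsPreconnected A :=
    isPreconnected_Ico.image _ (hc.mono Ico_subset_Icc_self)
  have hB : IsPreconnected B :=
    isPreconnected_Ici.image _ (by fun_prop)
  have hAB : IsPreconnected (A ∪ B) := by
    refine hA.union (γ 0) ⟨0, by simp, rfl⟩ ⟨1, by simp, by simp⟩ hB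
  have hsub : A ∪ B ⊆ Kᶜ := by
    rintro z (⟨s, hs, rfl⟩ | ⟨s, hs, rfl⟩)
    · exact hU s hs
    · intro hz
      have := hK _ hz
      have hs' : (1 : ℝ) ≤ s := hs
      simp only [add_sub_cancel_left, norm_mul, Complex.norm_real,
        Real.norm_of_nonneg (by linarith : (0:ℝ) ≤ s)] at this
      nlinarith
  have hcc := hAB.subset_connectedComponentIn (Or.inl ⟨t, ht, rfl⟩) hsub
  have hbB : Bornology.IsBounded B := hb.subset (subset_union_right.trans hcc)
  obtain ⟨D, hD⟩ := hbB.exists_norm_le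
  have hpos : 0 < ‖γ 0 - a‖ := by linarith
  let s : ℝ := 1 + (|D| + ‖a‖ + 1) / ‖γ 0 - a‖
  have hs1 : 1 ≤ s := by
    have : 0 ≤ (|D| + ‖a‖ + 1) / ‖γ 0 - a‖ := by positivity
    simp only [s]; linarith
  have h2 := hD _ ⟨s, hs1, rfl⟩
  have h3 : ‖(s : ℂ) * (γ 0 - a)‖ ≤ ‖a + s * (γ 0 - a)‖ + ‖a‖ := by
    have := norm_sub_le (a + s * (γ 0 - a)) a
    simpa using this
  rw [norm_mul, Complex.norm_real, Real.norm_of_nonneg (by linarith)] at h3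
  have h4 : s * ‖γ 0 - a‖ = ‖γ 0 - a‖ + (|D| + ‖a‖ + 1) := by
    simp only [s]; field_simp
  have := le_abs_self D
  linarith

lemma exists_net (E0 : Set ℂ) (hE0 : IsClosed E0) (ρ : ℂ → ℝ) (hρ : ∀ z ∈ E0, z ≠ 0 → 0 < ρ z)
    (B : ℝ) (hB : 0 < B) :
    ∃ F : Set ℂ, (∀ x ∈ F, x ∈ E0 ∧ x ≠ 0) ∧ (∀ r > 0, (F ∩ {x | r ≤ ‖x‖}).Finite) ∧
      ∀ z ∈ E0, z ≠ 0 → ‖z‖ ≤ B → ∃ x ∈ F, dist z x < ρ x := by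
  let T : ℕ → Set ℂ := fun n => {z ∈ E0 | B * (1/2)^(n+1) ≤ ‖z‖} ∩ closedBall 0 (B * (1/2)^n)
  have hT : ∀ n, IsCompact (T n) := by
    intro n
    refine (isCompact_closedBall _ _).inter_left ?_
    exact hE0.inter (isClosed_le continuous_const continuous_norm)
  have hT0 : ∀ n, ∀ z ∈ T n, z ≠ 0 := by
    rintro n z hz rfl
    have h1 := hz.1.2
    have : 0 < B * (1/2)^(n+1) := by positivity
    simp only [norm_zero] at h1
    linarith
  have hex : ∀ n, ∃ t : Finset ℂ, (∀ x ∈ t, x ∈ T n) ∧ T n ⊆ ⋃ x ∈ t, ball x (ρ x) := by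
    intro n
    exact (hT n).elim_nhds_subcover (fun x => ball x (ρ x))
      (fun x hx => ball_mem_nhds x (hρ x hx.1.1 (hT0 n x hx)))
  choose t ht1 ht2 using hex
  refine ⟨⋃ n, (t n : Set ℂ), ?_, ?_, ?_⟩
  · intro x hx
    obtain ⟨n, hn⟩ := mem_iUnion.1 hx
    have := ht1 n x hn
    exact ⟨this.1.1, hT0 n x this⟩
  · intro r hr
    obtain ⟨N, hN⟩ := exists_pow_lt_of_lt_one (show 0 < r / B by positivity)
      (show (1/2 : ℝ) < 1 by norm_num)
    rw [lt_div_iff₀ hB] at hN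
    refine Set.Finite.subset (Set.Finite.biUnion (finite_lt_nat N)
      (fun n _ => (t n).finite_toSet)) ?_
    rintro x ⟨hx, hxr⟩
    obtain ⟨n, hn⟩ := mem_iUnion.1 hx
    simp only [mem_iUnion]
    refine ⟨n, ?_, hn⟩
    by_contra hcon
    have hNn : N ≤ n := not_lt.1 hcon
    have h1 := (ht1 n x hn).2
    rw [mem_closedBall_zero_iff] at h1
    have h2 : (1/2 : ℝ)^n ≤ (1/2)^N := pow_le_pow_of_le_one (by norm_num) (by norm_num) hNn
    have hxr' : r ≤ ‖x‖ := hxr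
    nlinarith
  · intro z hz hz0 hzB
    have hzpos : 0 < ‖z‖ := norm_pos_iff.2 hz0
    obtain ⟨n, hn1, hn2⟩ := exists_nat_pow_near_of_lt_one (x := ‖z‖ / B) (y := 1/2)
      (by positivity) ((div_le_one hB).2 hzB) (by norm_num) (by norm_num)
    rw [lt_div_iff₀ hB] at hn1
    rw [div_le_iff₀ hB] at hn2
    have hzT : z ∈ T n := ⟨⟨hz, by linarith⟩, by rw [mem_closedBall_zero_iff]; linarith⟩
    have := ht2 n hzT
    simp only [mem_iUnion] at this
    obtain ⟨x, hx, hzx⟩ := this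
    exact ⟨x, mem_iUnion.2 ⟨n, hx⟩, hzx⟩

/-- If `z` has a continuous logarithm on `K \ {0}`, then `0` is accessible. -/
lemma arc_of_log (K : Set ℂ) (hK : IsCompact K) (h0K : (0 : ℂ) ∈ K)
    (L : {z : ℂ // z ∈ K ∧ z ≠ 0} → ℂ)
    (hL : Continuous L) (hexp : ∀ z, Complex.exp (L z) = z) :
    ∃ R > 0, (∀ z ∈ K, ‖z‖ < R) ∧ ∃ γ : ℝ → ℂ, ContinuousOn γ (Icc 0 1) ∧ InjOn γ (Icc 0 1) ∧
      γ 1 = 0 ∧ (∀ t ∈ Ico (0:ℝ) 1, γ t ∉ K) ∧ R ≤ ‖γ 0‖ := by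
  obtain ⟨u, Φ, hu, hun, hΦ, huΦ, huK⟩ := exists_u K hK.isClosed L hL hexp
  obtain ⟨R0, hR0, hKR⟩ : ∃ R > 0, ∀ z ∈ K, ‖z‖ < R := by
    obtain ⟨R, hR, h⟩ := hK.isBounded.exists_pos_norm_lt
    exact ⟨R, hR, h⟩
  let ρ : ℂ → ℝ := fun z => infDist z K / 2
  have hKne : K.Nonempty := ⟨0, h0K⟩
  have hρle : ∀ z, ρ z ≤ ‖z‖ / 2 := by
    intro z
    have := infDist_le_dist_of_mem (x := z) h0K
    rw [dist_zero_right] at this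
    simp only [ρ]; linarith
  have hρlip : ∀ x y, ρ x - ρ y ≤ dist x y := by
    intro x y
    have := infDist_le_infDist_add_dist (s := K) (x := x) (y := y)
    have h2 : 0 ≤ dist x y := dist_nonneg
    simp only [ρ]; linarith
  have hρnn : ∀ x, 0 ≤ ρ x := fun x => by simp only [ρ]; have := infDist_nonneg (x := x) (s := K); linarith
  have hρK : ∀ x p, dist p x < ρ x → p ∉ K := by
    intro x p h hp
    have := infDist_le_dist_of_mem (x := x) hp
    rw [dist_comm] at this
    have h2 := hρnn x
    simp only [ρ] at h h2
    linarith
  let E0 : Set ℂ := {z | u z = -(‖z‖ : ℂ)}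
  have hE0 : IsClosed E0 := isClosed_eq hu (by fun_prop)
  have hE0K : ∀ z ∈ E0, z ≠ 0 → z ∉ K := by
    intro z hz hz0 hzK
    have h1 : (‖z‖ : ℂ) = -(‖z‖ : ℂ) := (huK z hzK).symm.trans hz
    have h2 : (‖z‖ : ℝ) = -‖z‖ := by exact_mod_cast h1
    exact hz0 (norm_eq_zero.1 (by linarith))
  have hρpos : ∀ z ∈ E0, z ≠ 0 → 0 < ρ z := by
    intro z hz hz0
    have := (hK.isClosed.notMem_iff_infDist_pos hKne).1 (hE0K z hz hz0)
    simp only [ρ]; linarith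
  obtain ⟨F, hF1, hF2, hF3⟩ := exists_net E0 hE0 ρ hρpos (4 * R0) (by positivity)
  let G : SimpleGraph F :=
    { Adj := fun x y => x ≠ y ∧ dist (x : ℂ) y < ρ x + ρ y
      symm := ⟨fun x y h => ⟨h.1.symm, by rw [dist_comm, add_comm]; exact h.2⟩⟩
      loopless := ⟨fun x h => h.1 rfl⟩ }
  have hfin : ∀ r > 0, {x : F | r ≤ ‖(x : ℂ)‖}.Finite := by
    intro r hr
    refine Set.Finite.of_finite_image (f := Subtype.val) ((hF2 r hr).subset ?_)
      Subtype.val_injective.injOn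
    rintro _ ⟨x, hx, rfl⟩
    exact ⟨x.2, hx⟩
  have hxpos : ∀ x : F, 0 < ‖(x : ℂ)‖ := fun x => norm_pos_iff.2 (hF1 x x.2).2
  have hlf : ∀ v, (G.neighborSet v).Finite := by
    intro x
    refine (hfin (‖(x : ℂ)‖ / 3) (by linarith [hxpos x])).subset ?_
    intro y hy
    have h1 : dist (x : ℂ) y < ρ x + ρ y := hy.2
    have h2 := hρle x
    have h3 := hρle y
    have h4 := norm_sub_norm_le (x : ℂ) y
    rw [← dist_eq_norm] at h4
    change ‖(x : ℂ)‖ / 3 ≤ ‖(y : ℂ)‖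
    linarith
  let S0 : Set F := {x : F | R0 ≤ ‖(x : ℂ)‖}
  have hS0 : S0.Finite := hfin R0 hR0
  let C : Set F := {v | ∃ s ∈ S0, G.Reachable s v}
  have hinf : C.Infinite := by
    intro hCfin
    let N1 : Set ℂ := ⋃ x ∈ C, ball (x : ℂ) (ρ x)
    let N1c : Set ℂ := ⋃ x ∈ C, closedBall (x : ℂ) (ρ x)
    let N2 : Set ℂ := ⋃ x ∈ Cᶜ, ball (x : ℂ) (ρ x)
    have hN1o : IsOpen N1 := isOpen_biUnion fun _ _ => isOpen_ball
    have hN2o : IsOpen N2 := isOpen_biUnion fun _ _ => isOpen_ball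
    have hN1c : IsClosed N1c := hCfin.isClosed_biUnion fun _ _ => isClosed_closedBall
    have hN1N1c : N1 ⊆ N1c := iUnion₂_mono fun _ _ => ball_subset_closedBall
    have h0N1c : (0 : ℂ) ∉ N1c := by
      intro h
      simp only [N1c, mem_iUnion] at h
      obtain ⟨x, -, hx⟩ := h
      rw [mem_closedBall, dist_comm, dist_zero_right] at hx
      linarith [hρle x, hxpos x]
    have hdisj : ∀ z, z ∈ N1 → z ∉ N2 := by
      intro z h1 h2
      simp only [N1, N2, mem_iUnion] at h1 h2
      obtain ⟨x, hx, hzx⟩ := h1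
      obtain ⟨y, hy, hzy⟩ := h2
      apply hy
      obtain ⟨s, hs, hsx⟩ := hx
      refine ⟨s, hs, hsx.trans ?_⟩
      by_cases hxy : x = y
      · rw [hxy]
      · refine SimpleGraph.Adj.reachable (G := G) ⟨hxy, ?_⟩
        rw [mem_ball] at hzx hzy
        have := dist_triangle (x : ℂ) z y
        rw [dist_comm (x : ℂ) z] at this
        linarith
    have hN2b : ∀ z ∈ N2, ‖z‖ < 2 * R0 := by
      intro z hz
      simp only [N2, mem_iUnion] at hz
      obtain ⟨x, hx, hzx⟩ := hz
      have hxR : ‖(x : ℂ)‖ < R0 := by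
        by_contra hcon
        exact hx ⟨x, not_lt.1 hcon, SimpleGraph.Reachable.refl _⟩
      rw [mem_ball, dist_eq_norm] at hzx
      have h4 := norm_sub_norm_le z (x : ℂ)
      linarith [hρle x]
    let Q : Set ℂ := {z | 2 * R0 < ‖z‖}
    have hQ : IsOpen Q := isOpen_lt continuous_const continuous_norm
    let W0 : Set ℂ := N1cᶜ ∩ {z | ‖z‖ < 2 * R0}
    have hW0 : IsOpen W0 := hN1c.isOpen_compl.inter (isOpen_lt continuous_norm continuous_const)
    have h0W0 : (0 : ℂ) ∈ W0 := ⟨h0N1c, by simp [hR0]⟩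
    let Z2 : Set ℂ := E0 \ (N1 ∪ Q)
    let Z1 : Set ℂ := (E0 \ (N2 ∪ W0)) ∪ {z | 3 * R0 ≤ ‖z‖}
    have hZ2 : IsClosed Z2 := hE0.sdiff (hN1o.union hQ)
    have hZ1 : IsClosed Z1 :=
      (hE0.sdiff (hN2o.union hW0)).union (isClosed_le continuous_const continuous_norm)
    have hZ : Disjoint Z1 Z2 := by
      rw [Set.disjoint_left]
      rintro z h1 ⟨hzE, hz2⟩
      have hzQ : ‖z‖ ≤ 2 * R0 := not_lt.1 fun h => hz2 (Or.inr h)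
      rcases h1 with ⟨-, h1⟩ | h1
      · have hz0 : z ≠ 0 := by rintro rfl; exact h1 (Or.inr h0W0)
        obtain ⟨x, hxF, hx⟩ := hF3 z hzE hz0 (by linarith)
        by_cases hxC : (⟨x, hxF⟩ : F) ∈ C
        · apply hz2; left
          simp only [N1, mem_iUnion]
          exact ⟨⟨x, hxF⟩, hxC, hx⟩
        · apply h1; left
          simp only [N2, mem_iUnion]
          exact ⟨⟨x, hxF⟩, hxC, hx⟩
      · have h1' : 3 * R0 ≤ ‖z‖ := h1
        linarith
    obtain ⟨φ, hφ1, hφ2, hφ3⟩ := exists_continuous_zero_one_of_isClosed hZ1 hZ2 hZ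
    refine no_split u hu hun Φ hΦ huΦ φ φ.continuous (fun z => (hφ3 z).1) ?_ (3 * R0)
      (by positivity) (fun z hz => hφ1 (Or.inr hz)) ?_
    · refine hφ2 ⟨?_, ?_⟩
      · have : u 0 = 0 := norm_eq_zero.1 (by rw [hun]; simp)
        simp [E0, this]
      · rintro (h | h)
        · exact h0N1c (hN1N1c h)
        · have : 2 * R0 < ‖(0 : ℂ)‖ := h
          simp at this; linarith
    · intro z hz
      by_cases h : z ∈ N1 ∪ Q
      · left
        refine hφ1 (Or.inl ⟨hz, ?_⟩)
        rcases h with h | h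
        · rintro (h2 | h2)
          · exact hdisj z h h2
          · exact h2.1 (hN1N1c h)
        · have h' : 2 * R0 < ‖z‖ := h
          rintro (h2 | h2)
          · linarith [hN2b z h2]
          · have : ‖z‖ < 2 * R0 := h2.2
            linarith
      · right
        exact hφ2 ⟨hz, h⟩
  obtain ⟨c, hc0, hcadj, hcnadj, hcinj⟩ := exists_ray G S0 hS0 hlf hinf
  have hlim : Tendsto (fun n => (c n : ℂ)) atTop (𝓝 0) := by
    rw [tendsto_zero_iff_norm_tendsto_zero, Metric.tendsto_atTop']
    intro r hr
    have h1 : {n | r ≤ ‖(c n : ℂ)‖}.Finite := Set.Finite.preimage (f := c) hcinj.injOn (hfin r hr)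
    obtain ⟨N, hN⟩ := h1.bddAbove
    refine ⟨N, fun n hn => ?_⟩
    rw [dist_zero_right, norm_norm]
    by_contra hcon
    have := hN (show n ∈ {n | r ≤ ‖(c n : ℂ)‖} from not_lt.1 hcon)
    omega
  have hsegK : ∀ n, ∀ p ∈ segment ℝ (c n : ℂ) (c (n + 1)), p ∉ K := by
    intro n p hp
    have e1 := dist_add_dist_of_mem_segment hp
    have h1 : dist (c n : ℂ) (c (n + 1)) < ρ (c n) + ρ (c (n + 1)) := (hcadj n).2
    by_cases h : dist p (c n : ℂ) < ρ (c n)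
    · exact hρK _ _ h
    · refine hρK (c (n + 1)) p ?_
      rw [dist_comm p] at h
      linarith
  have hnd : ∀ i j, i + 2 ≤ j → ¬ dist (c i : ℂ) (c j) < ρ (c i) + ρ (c j) := by
    intro i j hij h
    refine hcnadj i j hij ⟨fun he => ?_, h⟩
    have := hcinj he
    omega
  obtain ⟨γ, hγc, hγi, hγ1, hγ0, hγs⟩ := polygon_arc (fun n => (c n : ℂ)) hlim
    (fun n h => (hcadj n).1 (Subtype.ext h)) (by
      intro i j p hij hp1 hp2
      by_cases hj : j = i + 1
      · subst hj
        refine ⟨rfl, ?_⟩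
        by_contra hne
        exact hnd i (i + 2) le_rfl
          (consec_lemma hρlip hp1 hp2 hne (hcadj i).2 (hcadj (i + 1)).2)
      · exfalso
        rcases cross_lemma (ρ := ρ) hp1 hp2 (hcadj i).2 (hcadj j).2 with h | h
        · exact hnd i j (by omega) h
        · exact hnd (i + 1) (j + 1) (by omega) h)
    (fun n h => hsegK n 0 h h0K)
  refine ⟨R0, hR0, hKR, γ, hγc, hγi, hγ1, ?_, ?_⟩
  · intro t ht
    obtain ⟨n, hn⟩ := hγs t ht
    exact hsegK n _ hn
  · rw [hγ0]; exact hc0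

/-- Accessibility of a boundary point of a non-separating plane continuum
is preserved by an isotopy of the boundary starting at the identity. -/
theorem accessible_preserved
    (X : Set ℂ) (hXne : X.Nonempty) (hXcpt : IsCompact X) (hXconn : IsConnected X)
    (hXns : IsConnected Xᶜ)
    (h : ℂ → ℝ → ℂ)
    (hcont : ContinuousOn (fun p : ℂ × ℝ => h p.1 p.2) (frontier X ×ˢ Set.Icc 0 1))
    (hinj : ∀ t ∈ Set.Icc (0:ℝ) 1, Set.InjOn (fun z => h z t) (frontier X))
    (hid : ∀ z ∈ frontier X, h z 0 = z)
    (x : ℂ) (hx : x ∈ frontier X) (hacc : Accessible Xᶜ x) :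
    ∀ t ∈ Set.Icc (0:ℝ) 1,
      Accessible (unbddComp ((fun z => h z t) '' frontier X)) (h x t) := by
  intro t ht
  have hXcl : IsClosed X := hXcpt.isClosed
  have hfrX : frontier X ⊆ X := hXcl.frontier_subset
  have hfr : IsCompact (frontier X) := hXcpt.of_isClosed_subset isClosed_frontier hfrX
  obtain ⟨γ, hγc, hγi, hγ1, hγU⟩ := hacc
  obtain ⟨R, hR, hXR⟩ := hXcpt.isBounded.exists_pos_norm_lt
  -- stage 0: a logarithm of `y + R`
  have hslit : ∀ y : {y : ℂ // y ∈ frontier X ∧ y ≠ x}, ((y : ℂ) + R) ∈ Complex.slitPlane := by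
    intro y
    left
    have h1 := hXR y (hfrX y.2.1)
    have h2 := (abs_le.1 (Complex.abs_re_le_norm (y : ℂ))).1
    simp; linarith
  have hL0 : Continuous (fun y : {y : ℂ // y ∈ frontier X ∧ y ≠ x} => Complex.log ((y : ℂ) + R)) :=
    Continuous.clog (by fun_prop) hslit
  -- stage 1: a path in the complement
  have hγ0 : γ 0 ∈ Xᶜ := hγU ⟨0, by simp, rfl⟩
  have hRX : (-(R : ℂ)) ∈ Xᶜ := by
    intro h
    have := hXR _ h
    simp [abs_of_pos hR] at this
  have hpc : IsPathConnected Xᶜ := hXcl.isOpen_compl.isConnected_iff_isPathConnected.1 hXns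
  obtain ⟨δ, hδ⟩ := hpc.joinedIn _ hRX _ hγ0
  obtain ⟨L1, hL1, hL1'⟩ := log_homotopy (Y := {y : ℂ // y ∈ frontier X ∧ y ≠ x}) (fun p => (p.2 : ℂ) - δ p.1) (by fun_prop)
    (fun p h => hδ p.1 (by rw [← sub_eq_zero.1 h]; exact hfrX p.2.2.1)) _ hL0
    (fun y => by
      rw [Complex.exp_log (Complex.slitPlane_ne_zero (hslit y))]; simp)
  -- stage 2: along the arc
  have hγc' : Continuous (fun s : unitInterval => γ s) :=
    hγc.comp_continuous continuous_subtype_val (fun s => s.2)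
  obtain ⟨L2, hL2, hL2'⟩ := log_homotopy (Y := {y : ℂ // y ∈ frontier X ∧ y ≠ x}) (fun p => (p.2 : ℂ) - γ p.1)
    ((continuous_subtype_val.comp continuous_snd).sub (hγc'.comp continuous_fst))
    (fun p h => by
      rcases p.1.2.2.lt_or_eq with h1 | h1
      · exact hγU ⟨p.1, ⟨p.1.2.1, h1⟩, rfl⟩ (by rw [← sub_eq_zero.1 h]; exact hfrX p.2.2.1)
      · have := sub_eq_zero.1 h
        rw [h1, hγ1] at this
        exact p.2.2.2 this) L1 hL1
    (fun y => by rw [hL1']; simp)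
  -- stage 3: along the isotopy
  have hmem : ∀ s : unitInterval, (s : ℝ) * t ∈ Icc (0:ℝ) 1 := fun s =>
    ⟨mul_nonneg s.2.1 ht.1, mul_le_one₀ s.2.2 ht.1 ht.2⟩
  have hc1 : Continuous (fun p : unitInterval × {y : ℂ // y ∈ frontier X ∧ y ≠ x} => h (p.2 : ℂ) ((p.1 : ℝ) * t)) :=
    hcont.comp_continuous (f := fun p : unitInterval × {y : ℂ // y ∈ frontier X ∧ y ≠ x} => ((p.2 : ℂ), (p.1 : ℝ) * t))
      (by fun_prop) (fun p => ⟨p.2.2.1, hmem p.1⟩)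
  have hc2 : Continuous (fun p : unitInterval × {y : ℂ // y ∈ frontier X ∧ y ≠ x} => h x ((p.1 : ℝ) * t)) :=
    hcont.comp_continuous (f := fun p : unitInterval × {y : ℂ // y ∈ frontier X ∧ y ≠ x} => (x, (p.1 : ℝ) * t))
      (by fun_prop) (fun p => ⟨hx, hmem p.1⟩)
  obtain ⟨L3, hL3, hL3'⟩ := log_homotopy (Y := {y : ℂ // y ∈ frontier X ∧ y ≠ x})
    (fun p => h (p.2 : ℂ) ((p.1 : ℝ) * t) - h x ((p.1 : ℝ) * t)) (hc1.sub hc2)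
    (fun p hp => p.2.2.2 (hinj _ (hmem p.1) p.2.2.1 hx (sub_eq_zero.1 hp))) L2 hL2
    (fun y => by
      rw [hL2']
      simp [hid _ y.2.1, hid x hx, hγ1])
  -- transport to the image
  let e : frontier X → ℂ := fun y => h y t - h x t
  have he : Continuous e :=
    (hcont.comp_continuous (f := fun y : frontier X => ((y : ℂ), t))
      (by fun_prop) (fun y => ⟨y.2, ht⟩)).sub continuous_const
  have hei : Function.Injective e := by
    intro y z hyz
    exact Subtype.ext (hinj t ht y.2 z.2 (sub_left_injective hyz))
  have : CompactSpace (frontier X) := isCompact_iff_compactSpace.1 hfr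
  let H := (he.isClosedEmbedding hei).isEmbedding.toHomeomorph
  have hH : ∀ z : range e, e (H.symm z) = z := fun z =>
    congrArg Subtype.val (H.apply_symm_apply z)
  have hex : e ⟨x, hx⟩ = 0 := sub_self _
  let L : {z : ℂ // z ∈ range e ∧ z ≠ 0} → ℂ := fun z =>
    L3 ⟨H.symm ⟨z, z.2.1⟩, (H.symm ⟨z, z.2.1⟩).2, fun hcon => z.2.2 (by
      have h1 := hH ⟨z, z.2.1⟩
      rw [show H.symm ⟨z, z.2.1⟩ = ⟨x, hx⟩ from Subtype.ext hcon, hex] at h1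
      exact h1.symm)⟩
  have hL : Continuous L := by
    refine hL3.comp ?_
    refine Continuous.subtype_mk ?_ _
    exact continuous_subtype_val.comp (H.symm.continuous.comp (by fun_prop))
  have hLe : ∀ z, Complex.exp (L z) = z := by
    intro z
    simp only [L]
    rw [hL3']
    have := hH ⟨z, z.2.1⟩
    simpa [e] using this
  obtain ⟨R', hR', hKR, β, hβc, hβi, hβ1, hβU, hβ0⟩ :=
    arc_of_log (range e) (isCompact_range he) ⟨⟨x, hx⟩, hex⟩ L hL hLe
  refine access_of _ (h x t) R' hR' ?_ (fun s => β s + h x t) (hβc.add continuousOn_const)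
    (fun s hs s' hs' hss => hβi hs hs' (add_left_injective _ hss)) (by simp [hβ1]) ?_
    (by simpa using hβ0)
  · rintro _ ⟨y, hy, rfl⟩
    exact hKR _ ⟨⟨y, hy⟩, rfl⟩
  · rintro s hs ⟨y, hy, hys⟩
    refine hβU s hs ⟨⟨y, hy⟩, ?_⟩
    simp only [e]
    simp only at hys
    rw [hys]; simp
end

section
/- Let X ⊂ ℂ be a non-separating continuum with 0 ∈ Bd(X) and X ⊂ B(0,1), and let C and D be distinct components of X̂. Then: (i) the relation 'C lies above D' is independent of the path chosen, i.e., if s₁, s₂ : [0,1] → {z : Re z ≤ 0} \ C are paths with s_i(0) ∈ D and s_i(1) = 0, and R_i = s_i([0,1]) ∪ [0,∞), then C is contained in the unbounded component of ℂ \ (D ∪ R₁) containing 1 + 2πi if and only if C is contained in the unbounded component of ℂ \ (D ∪ R₂) containing 1 + 2πi; (ii) either C lies above D or D lies above C. -/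
open Set Metric Topology Filter

/-- The set of connected components of a set `S`. -/
def componentsOf {α : Type*} [TopologicalSpace α] (S : Set α) : Set (Set α) :=
  {C | ∃ x ∈ S, C = connectedComponentIn S x}

/-- `X̂ = exp⁻¹(X \ {0})`. -/
def hatSet (X : Set ℂ) : Set ℂ := Complex.exp ⁻¹' (X \ {0})

/-- The conditions on the path `s` in the definition of "C lies above D":
`s : [0,1] → {z : Re z ≤ 0} \ C`, `s 0 ∈ D`, `s 1 = 0`. -/
def AbovePath (C D : Set ℂ) (s : ℝ → ℂ) : Prop :=
  ContinuousOn s (Set.Icc 0 1) ∧ (∀ u ∈ Set.Icc (0:ℝ) 1, (s u).re ≤ 0 ∧ s u ∉ C) ∧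
    s 0 ∈ D ∧ s 1 = 0

/-- The ray `R = s([0,1]) ∪ [0,∞)` associated to the path `s`. -/
def AboveRay (s : ℝ → ℂ) : Set ℂ := s '' Set.Icc 0 1 ∪ (Complex.ofReal '' Set.Ici 0)

/-- `C` is contained in the unbounded component of `ℂ \ (D ∪ R)` containing `1 + 2πi`. -/
def AboveVia (C D : Set ℂ) (s : ℝ → ℂ) : Prop :=
  ¬ Bornology.IsBounded
      (connectedComponentIn (D ∪ AboveRay s)ᶜ ((1 : ℂ) + 2 * (Real.pi : ℂ) * Complex.I)) ∧
  C ⊆ connectedComponentIn (D ∪ AboveRay s)ᶜ ((1 : ℂ) + 2 * (Real.pi : ℂ) * Complex.I)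

/-- `C` lies above `D`. -/
def LiesAbove (C D : Set ℂ) : Prop := ∃ s : ℝ → ℂ, AbovePath C D s ∧ AboveVia C D s


/-- Two continuous logarithms of the same function on a preconnected set differ by a constant. -/
lemma log_unique {A : Type*} [TopologicalSpace A] {S : Set A} (hS : IsPreconnected S) {f g : A → ℂ}
    (hf : ContinuousOn f S) (hg : ContinuousOn g S)
    (h : ∀ z ∈ S, Complex.exp (f z) = Complex.exp (g z)) {a b : A} (ha : a ∈ S) (hb : b ∈ S) :
    f a - g a = f b - g b := by
  refine Complex.isCoveringMap_exp.constOn_of_comp (g := fun z => f z - g z) hS (hf.sub hg) ?_ ha hb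
  intro a ha b hb
  apply Subtype.ext
  simp only [Complex.exp_sub]
  rw [h a ha, h b hb, div_self (Complex.exp_ne_zero _), div_self (Complex.exp_ne_zero _)]

/-- The quotient `(z-c)/(z-q)` tends to `1` at infinity. -/
lemma tendsto_quot (c q : ℂ) :
    Tendsto (fun z : ℂ => (z - c) / (z - q)) (Bornology.cobounded ℂ) (𝓝 1) := by
  have h1 : Tendsto (fun z : ℂ => z - q) (Bornology.cobounded ℂ) (Bornology.cobounded ℂ) :=
    tendsto_sub_const_cobounded q
  have h2 : Tendsto (fun z : ℂ => (z - q)⁻¹) (Bornology.cobounded ℂ) (𝓝 0) :=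
    tendsto_inv₀_cobounded.comp h1
  have h3 : Tendsto (fun z : ℂ => 1 + (q - c) * (z - q)⁻¹) (Bornology.cobounded ℂ) (𝓝 (1 + (q - c) * 0)) :=
    tendsto_const_nhds.add (tendsto_const_nhds.mul h2)
  rw [mul_zero, add_zero] at h3
  refine h3.congr' ?_
  have : ∀ᶠ z in Bornology.cobounded ℂ, z ≠ q := by
    have : Bornology.IsBounded ({q} : Set ℂ) := Bornology.isBounded_singleton
    filter_upwards [Bornology.isBounded_def.1 this] with z hz using hz
  filter_upwards [this] with z hz
  have : z - q ≠ 0 := sub_ne_zero.2 hz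
  field_simp
  ring

/-- `(z-c)/(z-q)` has a logarithm on `K` vanishing at infinity. -/
def HasLog (K : Set ℂ) (c q : ℂ) : Prop :=
  ∃ f : ℂ → ℂ, ContinuousOn f K ∧ (∀ z ∈ K, Complex.exp (f z) = (z - c) / (z - q)) ∧
    Tendsto f (Bornology.cobounded ℂ ⊓ 𝓟 K) (𝓝 0)

lemma hasLog_local {K : Set ℂ} (hK : IsClosed K) {c : ℂ} (hc : c ∉ K) :
    ∀ᶠ q in 𝓝 c, HasLog K c q := by
  obtain ⟨ε, hε, hb⟩ := Metric.isOpen_iff.1 hK.isOpen_compl c hc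
  filter_upwards [Metric.ball_mem_nhds c (half_pos hε)] with q hq
  have hd : ∀ z ∈ K, ‖q - c‖ < ‖z - q‖ := by
    intro z hz
    have h1 : ε ≤ dist z c := by
      by_contra h
      exact hb (mem_ball.2 (not_le.1 h)) hz
    have h2 : dist q c < ε / 2 := hq
    have := dist_triangle z q c
    rw [← dist_eq_norm, ← dist_eq_norm]
    linarith
  have hne : ∀ z ∈ K, z - q ≠ 0 := by
    intro z hz h0
    have := hd z hz
    rw [h0, norm_zero] at this
    exact absurd this (not_lt.2 (norm_nonneg _))
  have hq1 : ∀ z ∈ K, (z - c) / (z - q) = 1 + (q - c) / (z - q) := by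
    intro z hz
    have := hne z hz
    field_simp
    ring
  have hslit : ∀ z ∈ K, (z - c) / (z - q) ∈ Complex.slitPlane := by
    intro z hz
    rw [hq1 z hz]
    apply Complex.mem_slitPlane_of_norm_lt_one
    rw [norm_div, div_lt_one (norm_pos_iff.2 (hne z hz))]
    exact hd z hz
  refine ⟨fun z => Complex.log ((z - c) / (z - q)), ?_, ?_, ?_⟩
  · refine ContinuousOn.clog ?_ hslit
    exact ContinuousOn.div (by fun_prop) (by fun_prop) hne
  · intro z hz
    exact Complex.exp_log (Complex.slitPlane_ne_zero (hslit z hz))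
  · have h := (tendsto_quot c q).clog (by simp)
    rw [Complex.log_one] at h
    exact h.mono_left inf_le_left

lemma HasLog.trans {K : Set ℂ} {a b c : ℂ} (hb : b ∉ K) 
    (h1 : HasLog K a b) (h2 : HasLog K b c) : HasLog K a c := by
  obtain ⟨f, hf, hfe, hf0⟩ := h1
  obtain ⟨g, hg, hge, hg0⟩ := h2
  refine ⟨fun z => f z + g z, hf.add hg, ?_, by simpa using hf0.add hg0⟩
  intro z hz
  have : z - b ≠ 0 := sub_ne_zero.2 fun h => hb (h ▸ hz)
  rw [Complex.exp_add, hfe z hz, hge z hz]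
  field_simp

lemma HasLog.symm {K : Set ℂ} {a b : ℂ} (h1 : HasLog K a b) : HasLog K b a := by
  obtain ⟨f, hf, hfe, hf0⟩ := h1
  refine ⟨fun z => - f z, hf.neg, ?_, by simpa using hf0.neg⟩
  intro z hz
  rw [Complex.exp_neg, hfe z hz, inv_div]

/-- Easy half of Eilenberg's criterion. -/
lemma hasLog_of_preconnected {K S : Set ℂ} (hK : IsClosed K) (hS : IsPreconnected S)
    (hSK : S ⊆ Kᶜ) {c q : ℂ} (hc : c ∈ S) (hq : q ∈ S) : HasLog K c q := by
  refine hS.induction₂ (HasLog K) ?_ ?_ ?_ hc hq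
  · intro x hx
    exact (hasLog_local hK (hSK hx)).filter_mono nhdsWithin_le_nhds
  · intro x y z _ hy _ h1 h2
    exact h1.trans (hSK hy) h2
  · intro x y _ _ h
    exact h.symm

/-- There is no nonvanishing continuous function on the plane equal to `w - p` near infinity. -/
lemma no_nonvanishing {F : ℂ → ℂ} (hF : Continuous F) (h0 : ∀ w, F w ≠ 0) {p : ℂ} {r : ℝ}
    (hr : ∀ w, r < ‖w‖ → F w = w - p) : False := by
  obtain ⟨G, ⟨-, hG⟩, -⟩ := Complex.isCoveringMapOn_exp.existsUnique_continuousMap_lifts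
    (⟨F, hF⟩ : C(ℂ, ℂ)) (a₀ := 0) (e₀ := Complex.log (F 0)) (Complex.exp_log (h0 0)) h0
  set ρ : ℝ := |r| + ‖p‖ + 1 with hρ
  have hρ0 : 0 < ρ := by positivity
  let γ : ℝ → ℂ := fun t => p + ρ * Complex.exp (t * Complex.I)
  have hγ : ∀ t, Complex.exp (G (γ t)) = Complex.exp (Complex.log ρ + t * Complex.I) := by
    intro t
    have h1 : Complex.exp (G (γ t)) = F (γ t) := congrFun hG (γ t)
    rw [h1, hr, Complex.exp_add, Complex.exp_log (by exact_mod_cast hρ0.ne')]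
    · simp [γ]
    · have h2 : ‖(ρ:ℂ) * Complex.exp (t * Complex.I)‖ = ρ := by
        rw [norm_mul, Complex.norm_exp_ofReal_mul_I, Complex.norm_real, mul_one,
          Real.norm_of_nonneg hρ0.le]
      have h3 : ‖(ρ:ℂ) * Complex.exp (t * Complex.I)‖ ≤ ‖γ t‖ + ‖p‖ := by
        have : (ρ:ℂ) * Complex.exp (t * Complex.I) = γ t - p := by simp [γ]
        rw [this]; exact norm_sub_le _ _
      have := le_abs_self r
      linarith
  have := log_unique (S := (univ : Set ℝ)) isPreconnected_univ
    (f := fun t => G (γ t)) (g := fun t : ℝ => Complex.log ρ + t * Complex.I)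
    (by have := G.continuous; fun_prop) (by fun_prop) (fun t _ => hγ t)
    (mem_univ 0) (mem_univ (2 * Real.pi))
  have h5 : γ (2 * Real.pi) = γ 0 := by
    simp [γ, Complex.exp_two_pi_mul_I]
  simp only [h5] at this
  have h6 : (2 * Real.pi : ℂ) * Complex.I = 0 := by
    have h7 := sub_right_injective this
    simpa using h7.symm
  simp [Real.pi_ne_zero] at h6

lemma component_closure {K : Set ℂ} {c z : ℂ} (hc : c ∈ K)
    (hz : z ∈ closure (connectedComponentIn K c)) (hzK : z ∈ K) : z ∈ connectedComponentIn K c := by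
  have h1 : IsPreconnected (insert z (connectedComponentIn K c)) :=
    isPreconnected_connectedComponentIn.subset_closure (subset_insert _ _)
      (insert_subset hz subset_closure)
  exact h1.subset_connectedComponentIn (mem_insert_of_mem _ (mem_connectedComponentIn hc))
    (insert_subset hzK (connectedComponentIn_subset _ _)) (mem_insert _ _)

/-- Hard half of Eilenberg's criterion (Borsuk's argument). -/
lemma borsuk {K : Set ℂ} (hK : IsClosed K) {c q q' : ℂ} (hc : c ∉ K) (hq : q ∉ K) (hq' : q' ∉ K)
    (k : ℤ) {f : ℂ → ℂ} (hf : ContinuousOn f K)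
    (hfe : ∀ z ∈ K, Complex.exp (f z) = (z - c) / (z - q) * ((z - q') / (z - q)) ^ k)
    (hf0 : Tendsto f (Bornology.cobounded ℂ ⊓ 𝓟 K) (𝓝 0)) :
    c ∈ connectedComponentIn Kᶜ q ∨ c ∈ connectedComponentIn Kᶜ q' := by
  by_contra hcon
  push Not at hcon
  obtain ⟨hcq, hcq'⟩ := hcon
  set U := connectedComponentIn Kᶜ c with hU
  have hcU : c ∈ U := mem_connectedComponentIn hc
  have hUK : U ⊆ Kᶜ := connectedComponentIn_subset _ _
  have hUo : IsOpen U := hK.isOpen_compl.connectedComponentIn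
  have hqU : q ∉ U := fun h => hcq (connectedComponentIn_eq h ▸ hcU)
  have hqU' : q' ∉ U := fun h => hcq' (connectedComponentIn_eq h ▸ hcU)
  have hne : c - q ≠ 0 := sub_ne_zero.2 fun h => hqU (h ▸ hcU)
  let φ : ℂ → ℂ := fun w => q + w⁻¹
  have hφ : ∀ w, w ≠ 0 → ContinuousAt φ w := fun w hw =>
    continuousAt_const.add (continuousAt_inv₀ hw)
  have hφ0 : φ 0 = q := by simp [φ]
  let U' : Set ℂ := φ ⁻¹' U
  let K' : Set ℂ := {0} ∪ φ ⁻¹' K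
  have h0U' : (0:ℂ) ∉ U' := by
    change φ 0 ∉ U
    rwa [hφ0]
  have hU'o : IsOpen U' := by
    rw [isOpen_iff_mem_nhds]
    intro w hw
    have hw0 : w ≠ 0 := fun h => h0U' (h ▸ hw)
    exact (hφ w hw0) (hUo.mem_nhds hw)
  have hK'c : IsClosed K' := by
    rw [← isOpen_compl_iff, isOpen_iff_mem_nhds]
    intro w hw
    have hw0 : w ≠ 0 := fun h => hw (Or.inl h)
    have hwK : φ w ∈ Kᶜ := fun h => hw (Or.inr h)
    filter_upwards [(hφ w hw0) (hK.isOpen_compl.mem_nhds hwK), isOpen_ne.mem_nhds hw0] with v hv hv0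
    rintro (h | h)
    · exact hv0 h
    · exact hv h
  -- `U'` is bounded
  obtain ⟨ε, hε, hb⟩ := Metric.isOpen_iff.1 hK.isOpen_compl q hq
  have hball : ∀ z ∈ ball q ε, z ∉ U := by
    intro z hz hzU
    have h1 : ball q ε ⊆ connectedComponentIn Kᶜ q :=
      (convex_ball q ε).isPreconnected.subset_connectedComponentIn (mem_ball_self hε) hb
    have h2 := connectedComponentIn_eq (h1 hz)
    have h3 := connectedComponentIn_eq hzU
    apply hcq
    rw [h2, ← h3]
    exact hcU
  have hU'b : ∀ w, ε⁻¹ < ‖w‖ → w ∉ U' := by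
    intro w hw hwU
    apply hball (φ w) _ hwU
    rw [mem_ball, dist_eq_norm]
    simp only [φ, add_sub_cancel_left, norm_inv]
    exact inv_lt_of_inv_lt₀ hε hw
  -- closure of `U'`
  have hclos : closure U' ⊆ U' ∪ K' := by
    intro w hw
    by_cases hw0 : w = 0
    · exact Or.inr (Or.inl hw0)
    by_cases hwK : φ w ∈ K
    · exact Or.inr (Or.inr hwK)
    left
    apply component_closure (K := Kᶜ) hc _ hwK
    have : φ w ∈ closure (φ '' U') := (hφ w hw0).continuousWithinAt.mem_closure_image hw
    exact closure_mono (image_preimage_subset _ _) this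
  -- the log on `K'`
  let f' : ℂ → ℂ := fun w => if w = 0 then 0 else f (φ w)
  have hf'c : ContinuousOn f' K' := by
    intro w hw
    by_cases hw0 : w = 0
    · subst hw0
      rw [ContinuousWithinAt]
      have e0 : f' 0 = 0 := by simp [f']
      rw [e0]
      have hK'2 : K' ⊆ insert 0 (φ ⁻¹' K \ {0}) := by
        rintro v (h | h)
        · exact Or.inl h
        · by_cases hv : v = 0
          · exact Or.inl hv
          · exact Or.inr ⟨h, hv⟩
      refine Tendsto.mono_left ?_ (nhdsWithin_mono _ hK'2)
      rw [nhdsWithin_insert, tendsto_sup]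
      refine ⟨by simpa [e0] using tendsto_pure_nhds f' 0, ?_⟩
      have h1 : Tendsto φ (𝓝[φ ⁻¹' K \ {0}] 0) (Bornology.cobounded ℂ ⊓ 𝓟 K) := by
        rw [tendsto_inf]
        constructor
        · have h2 : Tendsto (fun w : ℂ => w⁻¹) (𝓝[≠] 0) (Bornology.cobounded ℂ) :=
            tendsto_inv₀_nhdsNE_zero
          have h3 : Tendsto (fun w : ℂ => q + w⁻¹) (𝓝[≠] 0) (Bornology.cobounded ℂ) :=
            (tendsto_const_add_cobounded q).comp h2
          exact h3.mono_left (nhdsWithin_mono _ fun v hv => hv.2)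
        · rw [tendsto_principal]
          filter_upwards [self_mem_nhdsWithin] with v hv using hv.1
      refine (hf0.comp h1).congr' ?_
      filter_upwards [self_mem_nhdsWithin] with v hv
      have : v ≠ 0 := hv.2
      simp [f', this]
    · have hwK : φ w ∈ K := by
        rcases hw with h | h
        · exact absurd h hw0
        · exact h
      have h1 : ContinuousWithinAt (f ∘ φ) (K' ∩ {0}ᶜ) w := by
        refine (hf (φ w) hwK).comp (hφ w hw0).continuousWithinAt ?_
        rintro v ⟨h | h, hv⟩
        · exact absurd h hv
        · exact h
      have h2 : ContinuousWithinAt f' (K' ∩ {0}ᶜ) w := by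
        refine h1.congr ?_ (by simp [f', hw0])
        intro v hv
        have : v ≠ 0 := hv.2
        simp [f', this]
      exact (continuousWithinAt_inter (isOpen_ne.mem_nhds hw0)).1 h2
  obtain ⟨G, hG⟩ := ContinuousMap.exists_restrict_eq hK'c
    (⟨K'.domRestrict f', continuousOn_iff_continuous_domRestrict.1 hf'c⟩ : C(K', ℂ))
  have hGf : ∀ w ∈ K', G w = f' w := fun w hw => DFunLike.congr_fun hG ⟨w, hw⟩
  let h : ℂ → ℂ := fun w => 1 - (q' - q) * w
  have hh : ∀ w ∈ closure U', h w ≠ 0 := by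
    intro w hw h0
    have hw0 : w ≠ 0 := by
      rintro rfl
      simp [h] at h0
    have : φ w = q' := by
      have : w⁻¹ = q' - q := by
        exact (eq_inv_of_mul_eq_one_left (sub_eq_zero.1 h0).symm).symm
      simp [φ, this]
    rcases hclos hw with h1 | h1 | h1
    · exact hqU' (this ▸ h1)
    · exact hw0 h1
    · exact hq' (this ▸ h1)
  let p : ℂ := (c - q)⁻¹
  let F₁ : ℂ → ℂ := fun w => -(c - q)⁻¹ * (Complex.exp (G w) * (h w) ^ (-k))
  have hF₁ : ContinuousOn F₁ (closure U') := by
    refine continuousOn_const.mul (ContinuousOn.mul ?_ ?_)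
    · exact (Complex.continuous_exp.comp G.continuous).continuousOn
    · refine ContinuousOn.zpow₀ (by fun_prop) _ ?_
      intro w hw
      exact Or.inl (hh w hw)
  have hagree : ∀ w ∈ closure U', w ∈ K' → F₁ w = w - p := by
    intro w hw hwK
    have hhw := hh w hw
    simp only [F₁, p]
    rw [hGf w hwK]
    by_cases hw0 : w = 0
    · subst hw0
      simp [f', h]
    · have hzK : φ w ∈ K := by
        rcases hwK with h1 | h1
        · exact absurd h1 hw0
        · exact h1
      have e1 : f' w = f (φ w) := by simp [f', hw0]
      rw [e1, hfe _ hzK]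
      have e2 : (φ w - q') / (φ w - q) = h w := by
        simp only [φ, h]
        field_simp
        ring
      have e3 : (φ w - c) / (φ w - q) = 1 - (c - q) * w := by
        simp only [φ]
        field_simp
        ring
      rw [e2, e3, zpow_neg, mul_assoc, mul_inv_cancel₀ (zpow_ne_zero _ hhw)]
      field_simp
      ring
  classical
  let F : ℂ → ℂ := fun w => if w ∈ U' then F₁ w else w - p
  have hFc : Continuous F := by
    refine continuous_if ?_ hF₁ (by fun_prop)
    intro w hw
    have hw' : w ∈ frontier U' := hw
    have hw1 : w ∈ closure U' := frontier_subset_closure hw'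
    apply hagree w hw1
    rcases hclos hw1 with h1 | h1
    · rw [hU'o.frontier_eq] at hw'
      exact absurd h1 hw'.2
    · exact h1
  refine no_nonvanishing hFc ?_ (p := p) (r := ε⁻¹) ?_
  · intro w
    by_cases hw : w ∈ U'
    · simp only [F, if_pos hw, F₁]
      exact mul_ne_zero (neg_ne_zero.2 (inv_ne_zero hne))
        (mul_ne_zero (Complex.exp_ne_zero _) (zpow_ne_zero _ (hh w (subset_closure hw))))
    · simp only [F, if_neg hw]
      intro h0
      apply hw
      rw [sub_eq_zero.1 h0]
      change q + (c - q)⁻¹⁻¹ ∈ U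
      simpa using hcU
  · intro w hw
    simp only [F, if_neg (hU'b w hw)]

/-- On a closed set missing the unbounded connected set `C`, intersected with a ball,
`z - c` has a continuous logarithm. -/
lemma exists_log_local {C : Set ℂ} (hconn : IsPreconnected C)
    (hunb : ¬ Bornology.IsBounded C) {c : ℂ} (hc : c ∈ C) {K : Set ℂ} (hK : IsClosed K)
    (hKC : C ⊆ Kᶜ) (r : ℝ) (hr : 0 < r) :
    ∃ f : ℂ → ℂ, ContinuousOn f (K ∩ ball 0 r) ∧
      ∀ z ∈ K ∩ ball 0 r, Complex.exp (f z) = z - c := by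
  obtain ⟨c', hc', hrc⟩ : ∃ c' ∈ C, r < ‖c'‖ := by
    by_contra h
    push Not at h
    exact hunb ((isBounded_iff_forall_norm_le).2 ⟨r, h⟩)
  obtain ⟨f, hf, hfe, -⟩ := hasLog_of_preconnected hK hconn hKC hc hc'
  have hc0 : c' ≠ 0 := norm_pos_iff.1 (hr.trans hrc)
  have hsl : ∀ z ∈ K ∩ ball (0:ℂ) r, 1 + -(z / c') ∈ Complex.slitPlane := by
    intro z hz
    apply Complex.mem_slitPlane_of_norm_lt_one
    rw [norm_neg, norm_div, div_lt_one (norm_pos_iff.2 hc0)]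
    have : ‖z‖ < r := by simpa using hz.2
    linarith
  refine ⟨fun z => f z + (Complex.log (1 + -(z / c')) + Complex.log (-c')), ?_, ?_⟩
  · refine (hf.mono inter_subset_left).add (ContinuousOn.add ?_ continuousOn_const)
    exact ContinuousOn.clog (by fun_prop) hsl
  · intro z hz
    rw [Complex.exp_add, Complex.exp_add, hfe z hz.1,
      Complex.exp_log (Complex.slitPlane_ne_zero (hsl z hz)), Complex.exp_log (neg_ne_zero.2 hc0)]
    have : z - c' ≠ 0 := sub_ne_zero.2 fun h => hKC hc' (h ▸ hz.1)
    field_simp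
    ring

/-- `z - c` has a continuous logarithm off the unbounded closed connected set `C ∋ c`
with connected complement. -/
lemma exists_log {C : Set ℂ} (hCc : IsClosed C) (hconn : IsPreconnected C)
    (hunb : ¬ Bornology.IsBounded C) (hcompl : IsConnected Cᶜ) {c : ℂ} (hc : c ∈ C) :
    ∃ f : ℂ → ℂ, ContinuousOn f Cᶜ ∧ ∀ z ∈ Cᶜ, Complex.exp (f z) = z - c := by
  classical
  have hCne : C.Nonempty := ⟨c, hc⟩
  obtain ⟨b, hb⟩ := hcompl.nonempty
  let W : ℕ → Set ℂ := fun n => {z | 1 / ((n:ℝ) + 1) < infDist z C} ∩ ball 0 ((n:ℝ) + 1)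
  have hWo : ∀ n, IsOpen (W n) := fun n =>
    (isOpen_lt continuous_const (continuous_infDist_pt C)).inter isOpen_ball
  have hWm : Monotone W := by
    intro m n hmn z hz
    have h1 : (m:ℝ) ≤ n := by exact_mod_cast hmn
    have h2 : 1 / ((m:ℝ) + 1) < infDist z C := hz.1
    have h3 : 1 / ((n:ℝ) + 1) < infDist z C := by
      refine lt_of_le_of_lt ?_ h2
      apply one_div_le_one_div_of_le <;> [positivity; linarith]
    exact ⟨h3, ball_subset_ball (by linarith) hz.2⟩
  have hWU : ∀ z ∈ Cᶜ, ∃ n, z ∈ W n := by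
    intro z hz
    have h1 : 0 < infDist z C := (hCc.notMem_iff_infDist_pos hCne).1 hz
    obtain ⟨n, hn⟩ := exists_nat_one_div_lt h1
    obtain ⟨m, hm⟩ := exists_nat_gt ‖z‖
    have a1 : z ∈ {z | 1 / (((max n m : ℕ):ℝ) + 1) < infDist z C} := by
      refine lt_of_le_of_lt ?_ hn
      apply one_div_le_one_div_of_le
      · positivity
      · have : (n:ℝ) ≤ (max n m : ℕ) := by exact_mod_cast le_max_left n m
        linarith
    refine ⟨max n m, a1, ?_⟩
    have : (m:ℝ) ≤ (max n m : ℕ) := by exact_mod_cast le_max_right n m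
    rw [mem_ball_zero_iff]
    linarith
  have hWC : ∀ n, W n ⊆ Cᶜ := by
    intro n z hz hzC
    have h1 : 1 / ((n:ℝ) + 1) < infDist z C := hz.1
    rw [infDist_zero_of_mem hzC] at h1
    have : 0 < 1 / ((n:ℝ) + 1) := by positivity
    linarith
  have hlog : ∀ n, ∃ f : ℂ → ℂ, ContinuousOn f (W n) ∧ (∀ z ∈ W n, Complex.exp (f z) = z - c) ∧
      (b ∈ W n → f b = Complex.log (b - c)) := by
    intro n
    obtain ⟨f, hf, hfe⟩ := exists_log_local hconn hunb hc
      (K := {z | 1 / ((n:ℝ) + 1) ≤ infDist z C})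
      (isClosed_le continuous_const (continuous_infDist_pt C)) (by
        intro z hz hzK
        have h1 : 1 / ((n:ℝ) + 1) ≤ infDist z C := hzK
        rw [infDist_zero_of_mem hz] at h1
        have : 0 < 1 / ((n:ℝ) + 1) := by positivity
        linarith) ((n:ℝ) + 1) (by positivity)
    have hsub : W n ⊆ {z | 1 / ((n:ℝ) + 1) ≤ infDist z C} ∩ ball 0 ((n:ℝ) + 1) :=
      fun z hz => ⟨by
        have h2 : 1 / ((n:ℝ) + 1) < infDist z C := hz.1
        exact h2.le, hz.2⟩
    by_cases hbn : b ∈ W n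
    · refine ⟨fun z => f z + (Complex.log (b - c) - f b),
        (hf.mono hsub).add continuousOn_const, ?_, fun _ => by ring⟩
      intro z hz
      have hbc : b - c ≠ 0 := sub_ne_zero.2 fun h => hb (h ▸ hc)
      rw [Complex.exp_add, Complex.exp_sub, Complex.exp_log hbc, hfe z (hsub hz), hfe b (hsub hbn),
        div_self hbc, mul_one]
    · exact ⟨f, hf.mono hsub, fun z hz => hfe z (hsub hz), fun h => absurd h hbn⟩
  choose f hf hfe hfb using hlog
  let V : ℕ → Set ℂ := fun n => connectedComponentIn (W n) b
  have hVW : ∀ n, V n ⊆ W n := fun n => connectedComponentIn_subset _ _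
  have hVo : ∀ n, IsOpen (V n) := fun n => (hWo n).connectedComponentIn
  have hbV : ∀ n z, z ∈ V n → b ∈ W n := by
    intro n z hz
    by_contra h
    have : V n = ∅ := connectedComponentIn_eq_empty h
    rw [this] at hz
    exact hz
  have hVU : ∀ z ∈ Cᶜ, ∃ n, z ∈ V n := by
    intro z hz
    have hpc := (hCc.isOpen_compl.isConnected_iff_isPathConnected).1 hcompl
    obtain ⟨γ, hγ⟩ := hpc.joinedIn b hb z hz
    have hcpt : IsCompact (range γ) := isCompact_range γ.continuous
    obtain ⟨n, hn⟩ := hcpt.elim_directed_cover W hWo (by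
      rintro w ⟨t, rfl⟩
      exact mem_iUnion.2 (hWU _ (hγ t))) (hWm.directed_le)
    refine ⟨n, ?_⟩
    have h1 : IsPreconnected (range γ) := isPreconnected_range γ.continuous
    exact h1.subset_connectedComponentIn ⟨0, γ.source⟩ hn ⟨1, γ.target⟩
  have hagree : ∀ m n z, m ≤ n → z ∈ V m → f m z = f n z := by
    intro m n z hmn hz
    have hbm := hbV m z hz
    have h1 := log_unique (S := V m) isPreconnected_connectedComponentIn (f := f m) (g := f n)
      ((hf m).mono (hVW m)) ((hf n).mono ((hVW m).trans (hWm hmn)))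
      (fun w hw => by rw [hfe m w (hVW m hw), hfe n w (hWm hmn (hVW m hw))])
      hz (mem_connectedComponentIn hbm)
    rw [hfb m hbm, hfb n (hWm hmn hbm), sub_self] at h1
    exact sub_eq_zero.1 h1
  have hagree' : ∀ m n z, z ∈ V m → z ∈ V n → f m z = f n z := by
    intro m n z hm hn
    rcases le_total m n with h | h
    · exact hagree m n z h hm
    · exact (hagree n m z h hn).symm
  let L : ℂ → ℂ := fun z => if h : ∃ n, z ∈ V n then f h.choose z else 0
  have hL : ∀ n z, z ∈ V n → L z = f n z := by
    intro n z hz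
    have h : ∃ n, z ∈ V n := ⟨n, hz⟩
    simp only [L, dif_pos h]
    exact hagree' _ _ z h.choose_spec hz
  refine ⟨L, ?_, ?_⟩
  · intro z hz
    obtain ⟨n, hn⟩ := hVU z hz
    have h1 : ContinuousAt (f n) z := (hf n).continuousAt ((hWo n).mem_nhds (hVW n hn))
    have h2 : L =ᶠ[𝓝 z] f n := by
      filter_upwards [(hVo n).mem_nhds hn] with w hw using hL n w hw
    exact (h1.congr h2.symm).continuousWithinAt
  · intro z hz
    obtain ⟨n, hn⟩ := hVU z hz
    rw [hL n z hn, hfe n z (hVW n hn)]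

/-- A component of a closed set with connected complement has connected complement. -/
lemma compl_component {Y : Set ℂ} (hY : IsClosed Y) (hYc : IsConnected Yᶜ) {x : ℂ} (hx : x ∈ Y) :
    IsConnected (connectedComponentIn Y x)ᶜ := by
  set C := connectedComponentIn Y x with hC
  have hCY : C ⊆ Y := connectedComponentIn_subset _ _
  have hCcl : IsClosed C := by
    rw [← closure_subset_iff_isClosed]
    intro z hz
    exact component_closure hx hz (hY.closure_subset_iff.2 hCY hz)
  obtain ⟨b, hb⟩ := hYc.nonempty
  have hbC : b ∈ Cᶜ := fun h => hb (hCY h)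
  set U := connectedComponentIn Cᶜ b with hU
  have hYU : Yᶜ ⊆ U := hYc.isPreconnected.subset_connectedComponentIn hb (compl_subset_compl.2 hCY)
  suffices h : Cᶜ ⊆ U by
    have : Cᶜ = U := h.antisymm (connectedComponentIn_subset _ _)
    rw [this]
    exact ⟨⟨b, mem_connectedComponentIn hbC⟩, isPreconnected_connectedComponentIn⟩
  intro z hz
  by_contra hzU
  set V := connectedComponentIn Cᶜ z with hV
  have hzV : z ∈ V := mem_connectedComponentIn hz
  have hVY : V ⊆ Y := by
    intro w hw
    by_contra hwY
    have h1 := connectedComponentIn_eq hw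
    have h2 := connectedComponentIn_eq (hYU hwY)
    apply hzU
    rw [hU, h2, ← h1]
    exact hzV
  have hVo : IsOpen V := hCcl.isOpen_compl.connectedComponentIn
  have hmeet : ∃ w ∈ closure V, w ∈ C := by
    by_contra hno
    push Not at hno
    have hVcl : IsClosed V := by
      rw [← closure_subset_iff_isClosed]
      intro w hw
      exact component_closure hz hw (hno w hw)
    have := IsClopen.eq_univ ⟨hVcl, hVo⟩ ⟨z, hzV⟩
    have hxV : x ∈ V := this ▸ mem_univ x
    exact connectedComponentIn_subset _ _ hxV (mem_connectedComponentIn hx)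
  obtain ⟨w, hwV, hwC⟩ := hmeet
  have h1 : closure V ⊆ connectedComponentIn Y w :=
    (isPreconnected_connectedComponentIn.closure).subset_connectedComponentIn hwV
      (hY.closure_subset_iff.2 hVY)
  have h2 := connectedComponentIn_eq hwC
  have h3 := h1 (subset_closure hzV)
  rw [← h2] at h3
  exact hz h3

lemma mem_hatSet {X : Set ℂ} {z : ℂ} : z ∈ hatSet X ↔ Complex.exp z ∈ X := by
  simp [hatSet, Complex.exp_ne_zero]

lemma hatSet_closed {X : Set ℂ} (hX : IsClosed X) : IsClosed (hatSet X) := by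
  have : hatSet X = Complex.exp ⁻¹' X := by
    ext z
    exact mem_hatSet
  rw [this]
  exact hX.preimage Complex.continuous_exp

lemma hatSet_re {X : Set ℂ} (hX : IsCompact X) (hXne : X.Nonempty) (hXb : X ⊆ ball 0 1) :
    ∃ δ > 0, ∀ z ∈ hatSet X, z.re ≤ -δ := by
  obtain ⟨x, hx, hmax⟩ := hX.exists_isMaxOn hXne continuous_norm.continuousOn
  have hx1 : ‖x‖ < 1 := by simpa using hXb hx
  set r := max ‖x‖ (1 / 2) with hr
  have hr0 : 0 < r := lt_of_lt_of_le (by norm_num) (le_max_right _ _)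
  have hr1 : r < 1 := max_lt hx1 (by norm_num)
  refine ⟨-Real.log r, neg_pos.2 (Real.log_neg hr0 hr1), ?_⟩
  intro z hz
  rw [neg_neg, Real.le_log_iff_exp_le hr0, ← Complex.norm_exp]
  exact (hmax (mem_hatSet.1 hz)).trans (le_max_left _ _)

lemma hatSet_compl {X : Set ℂ} (hX : IsCompact X) (h0 : (0:ℂ) ∈ X) (hXns : IsConnected Xᶜ)
    (hXb : X ⊆ ball 0 1) : IsConnected (hatSet X)ᶜ := by
  have hH : {z : ℂ | 0 ≤ z.re} ⊆ (hatSet X)ᶜ := by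
    intro z hz hzX
    have h1 := hXb (mem_hatSet.1 hzX)
    rw [mem_ball_zero_iff, Complex.norm_exp] at h1
    have h2 : (0:ℝ) ≤ z.re := hz
    have := Real.one_le_exp h2
    linarith
  have h1X : (1:ℂ) ∈ Xᶜ := fun h => by simpa using hXb h
  have hpc := (hX.isClosed.isOpen_compl.isConnected_iff_isPathConnected).1 hXns
  have h0H : (0:ℂ) ∈ (hatSet X)ᶜ := hH (by simp)
  refine ⟨⟨0, h0H⟩, ?_⟩
  apply isPreconnected_of_forall (0:ℂ)
  intro z hz
  have hzX : Complex.exp z ∈ Xᶜ := fun h => hz (mem_hatSet.2 h)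
  obtain ⟨γ, hγ⟩ := hpc.joinedIn _ hzX _ h1X
  have hγ0 : ∀ t, γ t ≠ 0 := fun t h => hγ t (h ▸ h0)
  obtain ⟨Γ, hΓ, hΓ0⟩ := Complex.isCoveringMap_exp.exists_path_lifts
    (⟨fun t => ⟨γ t, hγ0 t⟩, by fun_prop⟩ : C(unitInterval, {z : ℂ // z ≠ 0})) z
    (by apply Subtype.ext; simp)
  have hΓe : ∀ t, Complex.exp (Γ t) = γ t := fun t => congrArg Subtype.val (congrFun hΓ t)
  refine ⟨range Γ ∪ {z : ℂ | 0 ≤ z.re}, ?_, Or.inr (by simp), Or.inl ⟨0, hΓ0⟩, ?_⟩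
  · refine union_subset ?_ hH
    rintro w ⟨t, rfl⟩ hw
    have := mem_hatSet.1 hw
    rw [hΓe] at this
    exact hγ t this
  · refine IsPreconnected.union (Γ 1) ⟨1, rfl⟩ ?_ (isPreconnected_range Γ.continuous)
      (convex_halfSpace_re_ge 0).isPreconnected
    have h1 : ‖Complex.exp (Γ 1)‖ = 1 := by rw [hΓe]; simp
    rw [Complex.norm_exp, Real.exp_eq_one_iff] at h1
    exact h1.ge

/-- Boundary bumping: components of `X̂` are unbounded. -/
lemma hatSet_component_unbounded {X : Set ℂ} (hX : IsCompact X) (h0 : (0:ℂ) ∈ X)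
    (hXc : IsConnected X) {x : ℂ} (hx : x ∈ hatSet X) :
    ¬ Bornology.IsBounded (connectedComponentIn (hatSet X) x) := by
  intro hbd
  set C := connectedComponentIn (hatSet X) x with hC
  obtain ⟨r, hr⟩ := hbd.subset_ball (0:ℂ)
  have hxC : x ∈ C := mem_connectedComponentIn hx
  let Y : Set ℂ := hatSet X ∩ closedBall 0 r
  have hYc : IsCompact Y := (isCompact_closedBall 0 r).inter_left (hatSet_closed hX.isClosed)
  have hxY : x ∈ Y := ⟨hx, ball_subset_closedBall (hr hxC)⟩
  have : CompactSpace Y := isCompact_iff_compactSpace.1 hYc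
  let x' : Y := ⟨x, hxY⟩
  -- the component of `x` in `Y` lies in the open ball
  have hcomp : connectedComponent x' ⊆ (Subtype.val ⁻¹' ball (0:ℂ) r : Set Y) := by
    intro y hy
    apply hr
    have h1 : IsPreconnected (Subtype.val '' connectedComponent x') :=
      isPreconnected_connectedComponent.image _ continuous_subtype_val.continuousOn
    refine h1.subset_connectedComponentIn ⟨x', mem_connectedComponent, rfl⟩ ?_ ⟨y, hy, rfl⟩
    rintro _ ⟨w, _, rfl⟩
    exact w.2.1
  rw [connectedComponent_eq_iInter_isClopen] at hcomp
  have : Nonempty { s : Set Y // IsClopen s ∧ x' ∈ s } := ⟨univ, isClopen_univ, mem_univ _⟩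
  obtain ⟨Z, hZ⟩ := exists_subset_nhds_of_isCompact' (ι := { s : Set Y // IsClopen s ∧ x' ∈ s })
    (V := fun s => s.1) (by
      intro s t
      exact ⟨⟨s.1 ∩ t.1, s.2.1.inter t.2.1, s.2.2, t.2.2⟩, inter_subset_left, inter_subset_right⟩)
    (fun s => s.2.1.isClosed.isCompact) (fun s => s.2.1.isClosed)
    (U := (Subtype.val ⁻¹' ball (0:ℂ) r : Set Y)) (by
      intro y hy
      exact (isOpen_ball.preimage continuous_subtype_val).mem_nhds (hcomp hy))
  obtain ⟨⟨E, hEc, hxE⟩, hE⟩ : ∃ i : { s : Set Y // IsClopen s ∧ x' ∈ s },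
    i.1 ⊆ (Subtype.val ⁻¹' ball (0:ℂ) r : Set Y) := ⟨Z, hZ⟩
  obtain ⟨O, hO, hOE⟩ := isOpen_induced_iff.1 hEc.isOpen
  let E' : Set ℂ := Subtype.val '' E
  have hE'c : IsCompact E' := hEc.isClosed.isCompact.image continuous_subtype_val
  have hE'O : E' = hatSet X ∩ (O ∩ ball 0 r) := by
    ext z
    constructor
    · rintro ⟨y, hy, rfl⟩
      refine ⟨y.2.1, ?_, hE hy⟩
      rw [← hOE] at hy
      exact hy
    · rintro ⟨hz, hzO, hzb⟩
      refine ⟨⟨z, hz, ball_subset_closedBall hzb⟩, ?_, rfl⟩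
      rw [← hOE]
      exact hzO
  have hopen : IsOpen (Complex.exp '' (O ∩ ball 0 r)) :=
    Complex.isOpenMap_exp _ (hO.inter isOpen_ball)
  have heq : Complex.exp '' E' = X ∩ Complex.exp '' (O ∩ ball 0 r) := by
    rw [hE'O]
    ext z
    constructor
    · rintro ⟨w, ⟨hw, hw'⟩, rfl⟩
      exact ⟨mem_hatSet.1 hw, w, hw', rfl⟩
    · rintro ⟨hz, w, hw, rfl⟩
      exact ⟨w, ⟨mem_hatSet.2 hz, hw⟩, rfl⟩
  have hclosed : IsClosed (Complex.exp '' E') := (hE'c.image Complex.continuous_exp).isClosed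
  -- contradiction with connectedness of `X`
  have := hXc.isPreconnected (Complex.exp '' (O ∩ ball 0 r)) (Complex.exp '' E')ᶜ hopen
    hclosed.isOpen_compl (by
      intro z hz
      by_cases h : z ∈ Complex.exp '' E'
      · rw [heq] at h
        exact Or.inl h.2
      · exact Or.inr h) (by
      have : Complex.exp x ∈ Complex.exp '' E' := ⟨x, ⟨x', hxE, rfl⟩, rfl⟩
      rw [heq] at this
      exact ⟨_, this⟩) ⟨0, h0, by
        rintro ⟨w, _, hw⟩
        exact Complex.exp_ne_zero _ hw⟩
  obtain ⟨z, hz, hz1, hz2⟩ := this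
  apply hz2
  rw [heq]
  exact ⟨hz, hz1⟩

/-- The domain on which the auxiliary branches are defined. -/
def auxT : Set ℂ := {z | z.re ≤ 0 ∨ z.im = 0}

/-- The point `1 + 2πi`. -/
noncomputable def qU : ℂ := (1 : ℂ) + 2 * (Real.pi : ℂ) * Complex.I

/-- The point `1 - 2πi`. -/
noncomputable def qL : ℂ := (1 : ℂ) - 2 * (Real.pi : ℂ) * Complex.I

lemma qU_re : qU.re = 1 := by simp [qU]
lemma qU_im : qU.im = 2 * Real.pi := by simp [qU]
lemma qL_re : qL.re = 1 := by simp [qL]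
lemma qL_im : qL.im = -(2 * Real.pi) := by simp [qL]

lemma qU_notMem : qU ∉ auxT := by
  rintro (h | h)
  · rw [qU_re] at h; linarith
  · rw [qU_im] at h; linarith [Real.pi_pos]

lemma qL_notMem : qL ∉ auxT := by
  rintro (h | h)
  · rw [qL_re] at h; linarith
  · rw [qL_im] at h; linarith [Real.pi_pos]

/-- A branch of `log (z - qU)` on `auxT`. -/
lemma exists_log_qU : ∃ f : ℂ → ℂ, ContinuousOn f auxT ∧
    ∀ z ∈ auxT, Complex.exp (f z) = z - qU := by
  have hsl : ∀ z ∈ auxT, Complex.I * (z - qU) ∈ Complex.slitPlane := by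
    intro z hz
    rw [Complex.mem_slitPlane_iff]
    have hre : (Complex.I * (z - qU)).re = 2 * Real.pi - z.im := by
      simp [qU_im]
    have him : (Complex.I * (z - qU)).im = z.re - 1 := by
      simp [qU_re]
    rw [hre, him]
    rcases hz with h | h
    · right; intro h'; linarith
    · left; rw [h]; linarith [Real.pi_pos]
  refine ⟨fun z => Complex.log (Complex.I * (z - qU)) - Complex.log Complex.I, ?_, ?_⟩
  · exact (ContinuousOn.clog (by fun_prop) hsl).sub continuousOn_const
  · intro z hz
    rw [Complex.exp_sub, Complex.exp_log (Complex.slitPlane_ne_zero (hsl z hz)),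
      Complex.exp_log Complex.I_ne_zero]
    field_simp

lemma quot_im (z : ℂ) : ((z - qL) / (z - qU)).im
    = 4 * Real.pi * (z.re - 1) / Complex.normSq (z - qU) := by
  rw [Complex.div_im]
  simp only [Complex.sub_re, Complex.sub_im, qU_re, qU_im, qL_re, qL_im]
  ring

lemma log_neg_im_pos {r : ℂ} (h : 0 < r.im) :
    Complex.log (-r) + Real.pi * Complex.I = Complex.log r := by
  rw [Complex.log, Complex.log, Complex.arg_neg_eq_arg_sub_pi_of_im_pos h, norm_neg]
  push_cast
  ring

lemma log_neg_im_neg {r : ℂ} (h : r.im < 0) :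
    Complex.log (-r) + Real.pi * Complex.I = Complex.log r + 2 * Real.pi * Complex.I := by
  rw [Complex.log, Complex.log, Complex.arg_neg_eq_arg_add_pi_of_im_neg h, norm_neg]
  push_cast
  ring

/-- A branch of `log ((z - qL)/(z - qU))` on `auxT`, with its limits at infinity. -/
lemma exists_log_quot : ∃ g : ℂ → ℂ, ContinuousOn g auxT ∧
    (∀ z ∈ auxT, Complex.exp (g z) = (z - qL) / (z - qU)) ∧
    Tendsto g (Bornology.cobounded ℂ ⊓ 𝓟 {z | z.re < 1}) (𝓝 (2 * Real.pi * Complex.I)) ∧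
    Tendsto g (Bornology.cobounded ℂ ⊓ 𝓟 {z | 1 < z.re}) (𝓝 0) := by
  have hne : ∀ z ∈ auxT, z - qU ≠ 0 := fun z hz h =>
    qU_notMem ((sub_eq_zero.1 h) ▸ hz)
  have hpos : ∀ z : ℂ, z.re ≠ 1 → 0 < Complex.normSq (z - qU) := by
    intro z hz
    rw [Complex.normSq_pos]
    intro h
    apply hz
    rw [sub_eq_zero.1 h, qU_re]
  have hsl : ∀ z ∈ auxT, -((z - qL) / (z - qU)) ∈ Complex.slitPlane := by
    intro z hz
    by_cases h1 : z.re = 1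
    · have h2 : z = 1 := by
        rcases hz with h | h
        · linarith
        · exact Complex.ext (by simpa using h1) (by simpa using h)
      have h3 : -((z - qL) / (z - qU)) = 1 := by
        have := hne z hz
        rw [← neg_div, div_eq_one_iff_eq this, h2, qL, qU]
        ring
      rw [h3]
      exact Complex.one_mem_slitPlane
    · rw [Complex.mem_slitPlane_iff]
      right
      rw [Complex.neg_im, quot_im, neg_ne_zero]
      refine div_ne_zero (mul_ne_zero (by positivity) (sub_ne_zero.2 h1)) (hpos z h1).ne'
  have hlim : Tendsto (fun z => Complex.log ((z - qL) / (z - qU))) (Bornology.cobounded ℂ)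
      (𝓝 0) := by
    have h := (tendsto_quot qL qU).clog (by simp)
    rwa [Complex.log_one] at h
  refine ⟨fun z => Complex.log (-((z - qL) / (z - qU))) + Real.pi * Complex.I, ?_, ?_, ?_, ?_⟩
  · refine ContinuousOn.add (ContinuousOn.clog ?_ hsl) continuousOn_const
    exact (ContinuousOn.div (by fun_prop) (by fun_prop) hne).neg
  · intro z hz
    rw [Complex.exp_add, Complex.exp_log (Complex.slitPlane_ne_zero (hsl z hz)),
      Complex.exp_pi_mul_I]
    ring
  · have h2 := (hlim.mono_left (inf_le_left (b := 𝓟 {z : ℂ | z.re < 1}))).add_const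
      (2 * Real.pi * Complex.I)
    rw [zero_add] at h2
    refine h2.congr' ?_
    filter_upwards [mem_inf_of_right (mem_principal_self _)] with z hz
    have hz' : z.re < 1 := hz
    rw [log_neg_im_neg]
    rw [quot_im]
    apply div_neg_of_neg_of_pos _ (hpos z hz'.ne)
    have := Real.pi_pos
    nlinarith
  · have h2 := (hlim.mono_left (inf_le_left (b := 𝓟 {z : ℂ | 1 < z.re})))
    refine h2.congr' ?_
    filter_upwards [mem_inf_of_right (mem_principal_self _)] with z hz
    have hz' : 1 < z.re := hz
    rw [log_neg_im_pos]
    rw [quot_im]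
    apply div_pos _ (hpos z hz'.ne')
    have := Real.pi_pos
    nlinarith

/-- The positive real ray. -/
def posRay : Set ℂ := Complex.ofReal '' Set.Ici 0

lemma posRay_closed : IsClosed posRay :=
  Complex.isometry_ofReal.isClosedEmbedding.isClosedMap _ isClosed_Ici

lemma posRay_conn : IsPreconnected posRay :=
  isPreconnected_Ici.image _ Complex.continuous_ofReal.continuousOn

lemma mem_posRay {z : ℂ} : z ∈ posRay ↔ 0 ≤ z.re ∧ z.im = 0 := by
  constructor
  · rintro ⟨x, hx, rfl⟩
    exact ⟨by simpa using hx, by simp⟩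
  · rintro ⟨h1, h2⟩
    exact ⟨z.re, h1, Complex.ext (by simp) (by simp [h2])⟩

lemma posRay_tail : Bornology.cobounded ℂ ⊓ 𝓟 posRay ≤ Bornology.cobounded ℂ ⊓ 𝓟 {z | 1 < z.re} := by
  refine le_inf inf_le_left (le_principal_iff.2 ?_)
  have h1 : ∀ᶠ z in Bornology.cobounded ℂ, 1 < ‖z‖ :=
    tendsto_norm_cobounded_atTop.eventually (eventually_gt_atTop 1)
  filter_upwards [mem_inf_of_left h1, mem_inf_of_right (mem_principal_self posRay)] with z hz hzP
  obtain ⟨x, hx, rfl⟩ := hzP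
  have hx0 : (0:ℝ) ≤ x := hx
  have hz' : 1 < ‖(x:ℂ)‖ := hz
  rw [Complex.norm_real, Real.norm_of_nonneg hx0] at hz'
  simpa using hz'

lemma hasLog_posRay {c : ℂ} (hc : c.re < 0) : HasLog posRay c qU := by
  have hS : IsPreconnected (Neg.neg '' Complex.slitPlane) :=
    ((Complex.starConvex_one_slitPlane.isPathConnected
      Complex.one_mem_slitPlane).isConnected.isPreconnected).image _ continuous_neg.continuousOn
  refine hasLog_of_preconnected posRay_closed hS ?_ ⟨-c, ?_, by simp⟩ ⟨-qU, ?_, by simp⟩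
  · rintro _ ⟨w, hw, rfl⟩ h
    rw [mem_posRay] at h
    rw [Complex.mem_slitPlane_iff] at hw
    simp only [Complex.neg_re, Complex.neg_im] at h
    rcases hw with h' | h'
    · linarith [h.1]
    · exact h' (by linarith [h.2])
  · rw [Complex.mem_slitPlane_iff]
    left
    simpa using hc
  · rw [Complex.mem_slitPlane_iff]
    right
    rw [Complex.neg_im, qU_im]
    have := Real.pi_pos
    intro h
    linarith

/-- The facts about components of `X̂` used in the argument. -/
structure GoodSet (C : Set ℂ) : Prop where
  closed : IsClosed C
  conn : IsPreconnected C
  unb : ¬ Bornology.IsBounded C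
  compl : IsConnected Cᶜ
  re : ∃ δ > 0, ∀ z ∈ C, z.re ≤ -δ

lemma GoodSet.re_neg {C : Set ℂ} (h : GoodSet C) {z : ℂ} (hz : z ∈ C) : z.re < 0 := by
  obtain ⟨δ, h1, h2⟩ := h.re
  linarith [h2 z hz]

lemma GoodSet.nonempty {C : Set ℂ} (h : GoodSet C) : C.Nonempty := by
  rcases C.eq_empty_or_nonempty with h1 | h1
  · exact absurd (h1 ▸ Bornology.isBounded_empty) h.unb
  · exact h1

section
variable {C D : Set ℂ} {s : ℝ → ℂ}

lemma aboveRay_eq : AboveRay s = s '' Set.Icc 0 1 ∪ posRay := rfl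

lemma AbovePath.image_compact (hs : AbovePath C D s) : IsCompact (s '' Set.Icc 0 1) :=
  isCompact_Icc.image_of_continuousOn hs.1

lemma AbovePath.closed (hs : AbovePath C D s) (hD : GoodSet D) : IsClosed (D ∪ AboveRay s) :=
  hD.closed.union (hs.image_compact.isClosed.union posRay_closed)

lemma AbovePath.zero_mem (hs : AbovePath C D s) : (0:ℂ) ∈ s '' Set.Icc 0 1 :=
  ⟨1, by simp, hs.2.2.2⟩

lemma AbovePath.conn (hs : AbovePath C D s) (hD : GoodSet D) :
    IsPreconnected (D ∪ AboveRay s) := by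
  rw [aboveRay_eq]
  have h1 : IsPreconnected (s '' Set.Icc 0 1 ∪ posRay) :=
    IsPreconnected.union 0 hs.zero_mem (mem_posRay.2 (by simp))
      (isPreconnected_Icc.image _ hs.1) posRay_conn
  exact IsPreconnected.union (s 0) hs.2.2.1 (Or.inl ⟨0, by simp, rfl⟩) hD.conn h1

lemma AbovePath.subset_auxT (hs : AbovePath C D s) (hD : GoodSet D) :
    D ∪ AboveRay s ⊆ auxT := by
  rintro z (h | ⟨t, ht, rfl⟩ | h)
  · exact Or.inl (hD.re_neg h).le
  · exact Or.inl (hs.2.1 t ht).1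
  · exact Or.inr (mem_posRay.1 h).2

lemma AbovePath.disj (hs : AbovePath C D s) (hC : GoodSet C) (hCD : Disjoint C D) :
    C ⊆ (D ∪ AboveRay s)ᶜ := by
  rintro z hz (h | ⟨t, ht, rfl⟩ | h)
  · exact disjoint_left.1 hCD hz h
  · exact (hs.2.1 t ht).2 hz
  · have h1 := (mem_posRay.1 h).1
    have := hC.re_neg hz
    linarith

/-- The open first quadrant. -/
def quadrant : Set ℂ := {z | 0 < z.re} ∩ {z | 0 < z.im}

lemma quadrant_conn : IsPreconnected quadrant :=
  ((convex_halfSpace_re_gt 0).inter (convex_halfSpace_im_gt 0)).isPreconnected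

lemma qU_quadrant : qU ∈ quadrant :=
  ⟨by simp [qU_re], by
    have := Real.pi_pos
    change 0 < qU.im
    rw [qU_im]
    positivity⟩

lemma AbovePath.quadrant_subset (hs : AbovePath C D s) (hD : GoodSet D) :
    quadrant ⊆ (D ∪ AboveRay s)ᶜ := by
  intro z hz h
  have h1 : 0 < z.re := hz.1
  have h2 : 0 < z.im := hz.2
  rcases hs.subset_auxT hD h with h | h <;> linarith

lemma aboveVia_iff (hs : AbovePath C D s) (hC : GoodSet C) (hD : GoodSet D) (hCD : Disjoint C D)
    {c : ℂ} (hc : c ∈ C) :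
    AboveVia C D s ↔ c ∈ connectedComponentIn (D ∪ AboveRay s)ᶜ qU := by
  change (_ ∧ C ⊆ connectedComponentIn (D ∪ AboveRay s)ᶜ qU) ↔ _
  constructor
  · intro h
    exact h.2 hc
  · intro h
    constructor
    · intro hb
      have h1 : quadrant ⊆ connectedComponentIn (D ∪ AboveRay s)ᶜ qU :=
        quadrant_conn.subset_connectedComponentIn qU_quadrant (hs.quadrant_subset hD)
      obtain ⟨r, hr⟩ := isBounded_iff_forall_norm_le.1 (hb.subset h1)
      have h2 := hr (⟨|r| + 1, 1⟩ : ℂ) ⟨by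
        change 0 < |r| + 1
        positivity, by
        change (0:ℝ) < 1
        norm_num⟩
      have h3 := Complex.re_le_norm (⟨|r| + 1, 1⟩ : ℂ)
      have h4 := le_abs_self r
      simp only at h3
      linarith
    · rw [connectedComponentIn_eq h]
      exact hC.conn.subset_connectedComponentIn hc (hs.disj hC hCD)

lemma exists_f0 (hC : GoodSet C) {c : ℂ} (hc : c ∈ C) :
    ∃ f : ℂ → ℂ, ContinuousOn f (Cᶜ ∩ auxT) ∧
      ∀ z ∈ Cᶜ ∩ auxT, Complex.exp (f z) = (z - c) / (z - qU) := by
  obtain ⟨L, hL, hLe⟩ := exists_log hC.closed hC.conn hC.unb hC.compl hc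
  obtain ⟨ℓ, hℓ, hℓe⟩ := exists_log_qU
  refine ⟨fun z => L z - ℓ z, (hL.mono inter_subset_left).sub (hℓ.mono inter_subset_right), ?_⟩
  intro z hz
  rw [Complex.exp_sub, hLe z hz.1, hℓe z hz.2]

lemma AbovePath.subset_f0 (hs : AbovePath C D s) (hC : GoodSet C) (hD : GoodSet D)
    (hCD : Disjoint C D) : D ∪ AboveRay s ⊆ Cᶜ ∩ auxT :=
  fun _ hz => ⟨fun h => hs.disj hC hCD h hz, hs.subset_auxT hD hz⟩

lemma tendsto_of_bounded {S : Set ℂ} (hS : IsCompact S) (f : ℂ → ℂ) (l : Filter ℂ) :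
    Tendsto f (Bornology.cobounded ℂ ⊓ 𝓟 S) l := by
  have : Bornology.cobounded ℂ ⊓ 𝓟 S = ⊥ := by
    rw [inf_principal_eq_bot]
    exact Bornology.isBounded_def.1 hS.isBounded
  rw [this]
  exact tendsto_bot

lemma above_indep {s₁ s₂ : ℝ → ℂ} (hC : GoodSet C) (hD : GoodSet D) (hCD : Disjoint C D)
    (h₁ : AbovePath C D s₁) (h₂ : AbovePath C D s₂) (h : AboveVia C D s₁) : AboveVia C D s₂ := by
  obtain ⟨c, hc⟩ := hC.nonempty
  rw [aboveVia_iff h₁ hC hD hCD hc] at h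
  rw [aboveVia_iff h₂ hC hD hCD hc]
  obtain ⟨f₀, hf₀, hf₀e⟩ := exists_f0 hC hc
  have hK₁ := h₁.subset_f0 hC hD hCD
  have hK₂ := h₂.subset_f0 hC hD hCD
  have hqK : ∀ {s}, AbovePath C D s → qU ∉ D ∪ AboveRay s :=
    fun hs h => qU_notMem (hs.subset_auxT hD h)
  obtain ⟨f, hf, hfe, hfl⟩ := hasLog_of_preconnected (h₁.closed hD)
    (isPreconnected_connectedComponentIn (F := (D ∪ AboveRay s₁)ᶜ) (x := qU))
    (connectedComponentIn_subset _ _) h (mem_connectedComponentIn (hqK h₁))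
  have h0 : s₁ 0 ∈ D ∪ AboveRay s₁ := Or.inl h₁.2.2.1
  set κ := f (s₁ 0) - f₀ (s₁ 0) with hκ
  have hκ1 : ∀ z ∈ D ∪ AboveRay s₁, f z = f₀ z + κ := by
    intro z hz
    have := log_unique (h₁.conn hD) hf (hf₀.mono hK₁)
      (fun z hz => by rw [hfe z hz, hf₀e z (hK₁ hz)]) hz h0
    rw [hκ, ← this]
    ring
  have hκe : Complex.exp κ = 1 := by
    rw [hκ, Complex.exp_sub, hfe _ h0, ← hf₀e _ (hK₁ h0), div_self (Complex.exp_ne_zero _)]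
  have := borsuk (h₂.closed hD) (c := c) (q := qU) (q' := qU) (h₂.disj hC hCD hc)
    (hqK h₂) (hqK h₂) 0 (f := fun z => f₀ z + κ) ((hf₀.mono hK₂).add continuousOn_const)
    (fun z hz => by rw [Complex.exp_add, hκe, hf₀e z (hK₂ hz)]; simp) (by
      have hsub : D ∪ AboveRay s₂ ⊆ (D ∪ AboveRay s₁) ∪ s₂ '' Set.Icc 0 1 := by
        rintro z (h | h | h)
        · exact Or.inl (Or.inl h)
        · exact Or.inr h
        · exact Or.inl (Or.inr (Or.inr h))
      refine Tendsto.mono_left ?_ (inf_le_inf_left _ (principal_mono.2 hsub))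
      rw [← sup_principal, inf_sup_left, tendsto_sup]
      refine ⟨hfl.congr' ?_, tendsto_of_bounded h₂.image_compact _ _⟩
      filter_upwards [mem_inf_of_right (mem_principal_self _)] with z hz using hκ1 z hz)
  rcases this with h | h <;> exact h

lemma above_or_below (hC : GoodSet C) (hD : GoodSet D) (hCD : Disjoint C D)
    (hs : AbovePath C D s) {c : ℂ} (hc : c ∈ C) :
    c ∈ connectedComponentIn (D ∪ AboveRay s)ᶜ qU ∨
      c ∈ connectedComponentIn (D ∪ AboveRay s)ᶜ qL := by
  obtain ⟨f₀, hf₀, hf₀e⟩ := exists_f0 hC hc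
  have hK := hs.subset_f0 hC hD hCD
  have hDK : D ⊆ D ∪ AboveRay s := subset_union_left
  have hPK : posRay ⊆ D ∪ AboveRay s := fun z hz => Or.inr (Or.inr hz)
  obtain ⟨g, hg, hge, hgD, hgP⟩ := exists_log_quot
  -- generic comparison
  have key : ∀ S : Set ℂ, IsPreconnected S → S.Nonempty → S ⊆ D ∪ AboveRay s → HasLog S c qU →
      ∃ m : ℤ, Tendsto f₀ (Bornology.cobounded ℂ ⊓ 𝓟 S) (𝓝 (m * (2 * Real.pi * Complex.I))) := by
    rintro S hS ⟨a, ha⟩ hSK ⟨f, hf, hfe, hfl⟩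
    have he : Complex.exp (f₀ a - f a) = 1 := by
      rw [Complex.exp_sub, hfe a ha, ← hf₀e a (hK (hSK ha)), div_self (Complex.exp_ne_zero _)]
    obtain ⟨m, hm⟩ := Complex.exp_eq_one_iff.1 he
    refine ⟨m, ?_⟩
    have h1 := hfl.add_const ((m:ℂ) * (2 * Real.pi * Complex.I))
    rw [zero_add] at h1
    refine h1.congr' ?_
    filter_upwards [mem_inf_of_right (mem_principal_self _)] with z hz
    have := log_unique hS (hf₀.mono (hSK.trans hK)) hf
      (fun z hz => by rw [hfe z hz, hf₀e z (hK (hSK hz))]) ha hz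
    rw [← hm, this]
    ring
  have hqD : qU ∈ Dᶜ := fun h => by
    have := hD.re_neg h
    rw [qU_re] at this
    linarith
  obtain ⟨m, hm⟩ := key D hD.conn hD.nonempty hDK
    (hasLog_of_preconnected hD.closed hD.compl.isPreconnected subset_rfl
      (disjoint_left.1 hCD hc) hqD)
  obtain ⟨n, hn⟩ := key posRay posRay_conn ⟨0, mem_posRay.2 (by simp)⟩ hPK
    (hasLog_posRay (hC.re_neg hc))
  refine borsuk (hs.closed hD) (hs.disj hC hCD hc)
    (fun h => qU_notMem (hs.subset_auxT hD h)) (fun h => qL_notMem (hs.subset_auxT hD h))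
    (-(m - n)) (f := fun z => (f₀ z - n * (2 * Real.pi * Complex.I)) + ((-(m - n) : ℤ) : ℂ) * g z)
    ?_ ?_ ?_
  · exact ((hf₀.mono hK).sub continuousOn_const).add
      (continuousOn_const.mul (hg.mono (hs.subset_auxT hD)))
  · intro z hz
    rw [Complex.exp_add, Complex.exp_sub, hf₀e z (hK hz), Complex.exp_int_mul_two_pi_mul_I,
      div_one, Complex.exp_int_mul, hge z (hs.subset_auxT hD hz)]
  · have heq : D ∪ AboveRay s = D ∪ (s '' Set.Icc 0 1 ∪ posRay) := rfl
    rw [heq, ← sup_principal, ← sup_principal, inf_sup_left, inf_sup_left, tendsto_sup, tendsto_sup]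
    refine ⟨?_, tendsto_of_bounded hs.image_compact _ _, ?_⟩
    · have hD1 : Bornology.cobounded ℂ ⊓ 𝓟 D ≤ Bornology.cobounded ℂ ⊓ 𝓟 {z | z.re < 1} := by
        refine inf_le_inf_left _ (principal_mono.2 ?_)
        intro z hz
        have := hD.re_neg hz
        change z.re < 1
        linarith
      have h1 := (hm.sub_const ((n:ℂ) * (2 * Real.pi * Complex.I))).add
        ((hgD.mono_left hD1).const_mul ((-(m - n) : ℤ) : ℂ))
      have e : (m:ℂ) * (2 * Real.pi * Complex.I) - n * (2 * Real.pi * Complex.I)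
          + ((-(m - n) : ℤ) : ℂ) * (2 * Real.pi * Complex.I) = 0 := by
        push_cast
        ring
      rwa [e] at h1
    · have h1 := (hn.sub_const ((n:ℂ) * (2 * Real.pi * Complex.I))).add
        ((hgP.mono_left posRay_tail).const_mul ((-(m - n) : ℤ) : ℂ))
      have e : (n:ℂ) * (2 * Real.pi * Complex.I) - n * (2 * Real.pi * Complex.I)
          + ((-(m - n) : ℤ) : ℂ) * 0 = 0 := by
        ring
      rwa [e] at h1

end

/-- A path from `D` to `0` avoiding `C` and staying in the open left half plane until time `1`. -/
lemma exists_path {C D : Set ℂ} (hC : GoodSet C) (hD : GoodSet D) (hCD : Disjoint C D) :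
    ∃ s, AbovePath C D s ∧ ∀ t ∈ Ico (0:ℝ) 1, (s t).re < 0 := by
  obtain ⟨d, hd⟩ := hD.nonempty
  obtain ⟨δ, hδ, hCδ⟩ := hC.re
  obtain ⟨δ', hδ', hDδ⟩ := hD.re
  have h0 : (0:ℂ) ∈ Cᶜ := fun h => by simpa using hC.re_neg h
  have hpc := (hC.closed.isOpen_compl.isConnected_iff_isPathConnected).1 hC.compl
  obtain ⟨γ, hγ⟩ := hpc.joinedIn d (disjoint_right.1 hCD hd) 0 h0
  set η := min (δ / 2) δ' with hη
  have hη0 : 0 < η := lt_min (half_pos hδ) hδ'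
  have hη1 : η < δ := lt_of_le_of_lt (min_le_left _ _) (half_lt_self hδ)
  have hη2 : η ≤ δ' := min_le_right _ _
  let s : ℝ → ℂ := fun t => ((min (γ.extend t).re (-(η * (1 - t))) : ℝ) : ℂ)
    + ((γ.extend t).im : ℂ) * Complex.I
  have hre : ∀ t, (s t).re = min (γ.extend t).re (-(η * (1 - t))) := by
    intro t
    simp [s]
  have him : ∀ t, (s t).im = (γ.extend t).im := by
    intro t
    simp [s]
  have hγC : ∀ t, γ.extend t ∉ C := by
    intro t
    have : γ.extend t ∈ range γ := by
      rw [← γ.extend_range]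
      exact ⟨t, rfl⟩
    obtain ⟨u, hu⟩ := this
    rw [← hu]
    exact hγ u
  have hc : Continuous fun t => γ.extend t := γ.continuous_extend
  refine ⟨s, ⟨?_, ?_, ?_, ?_⟩, ?_⟩
  · refine Continuous.continuousOn ?_
    have h1 : Continuous fun t => (γ.extend t).re := Complex.continuous_re.comp hc
    have h2 : Continuous fun t => (γ.extend t).im := Complex.continuous_im.comp hc
    have h3 : Continuous fun t => min (γ.extend t).re (-(η * (1 - t))) := h1.min (by fun_prop)
    exact (Complex.continuous_ofReal.comp h3).add
      ((Complex.continuous_ofReal.comp h2).mul continuous_const)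
  · intro t ht
    have h1 : 0 ≤ η * (1 - t) := mul_nonneg hη0.le (by linarith [ht.2])
    constructor
    · rw [hre]
      exact (min_le_right _ _).trans (by linarith)
    · intro hsC
      rcases le_total (γ.extend t).re (-(η * (1 - t))) with h | h
      · apply hγC t
        have : s t = γ.extend t := Complex.ext (by rw [hre, min_eq_left h]) (him t)
        rwa [this] at hsC
      · have h2 := hCδ _ hsC
        rw [hre, min_eq_right h] at h2
        have : η * (1 - t) ≤ η := by nlinarith [ht.1]
        linarith
  · have : s 0 = d := by
      apply Complex.ext
      · rw [hre, γ.extend_zero, min_eq_left]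
        have := hDδ d hd
        linarith
      · rw [him, γ.extend_zero]
    rw [this]
    exact hd
  · apply Complex.ext
    · rw [hre, γ.extend_one]
      simp
    · rw [him, γ.extend_one]
  · intro t ht
    rw [hre]
    refine lt_of_le_of_lt (min_le_right _ _) ?_
    have : 0 < η * (1 - t) := mul_pos hη0 (by linarith [ht.2])
    linarith

/-- The retraction onto the closed left half plane. -/
noncomputable def fold (z : ℂ) : ℂ := ((min z.re 0 : ℝ) : ℂ) + (z.im : ℂ) * Complex.I

lemma fold_re (z : ℂ) : (fold z).re = min z.re 0 := by simp [fold]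

lemma fold_im (z : ℂ) : (fold z).im = z.im := by simp [fold]

lemma fold_cont : Continuous fold := by
  have h3 : Continuous fun z : ℂ => min z.re 0 := Complex.continuous_re.min continuous_const
  exact (Complex.continuous_ofReal.comp h3).add
      ((Complex.continuous_ofReal.comp Complex.continuous_im).mul continuous_const)

lemma fold_eq {z : ℂ} (h : z.re ≤ 0) : fold z = z :=
  Complex.ext (by rw [fold_re, min_eq_left h]) (fold_im z)

lemma below_swap {C D : Set ℂ} {s : ℝ → ℂ} (hC : GoodSet C) (hD : GoodSet D) (hCD : Disjoint C D)
    (hs : AbovePath C D s) (hs' : ∀ t ∈ Ico (0:ℝ) 1, (s t).re < 0) {c : ℂ} (hc : c ∈ C)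
    (h : c ∈ connectedComponentIn (D ∪ AboveRay s)ᶜ qL) : LiesAbove D C := by
  set K := D ∪ AboveRay s with hK
  have hqL : qL ∈ Kᶜ := fun h => qL_notMem (hs.subset_auxT hD h)
  have hconn : IsConnected (connectedComponentIn Kᶜ qL) :=
    ⟨⟨c, h⟩, isPreconnected_connectedComponentIn⟩
  have hpc := ((hs.closed hD).isOpen_compl.connectedComponentIn
    (x := qL)).isConnected_iff_isPathConnected.1 hconn
  obtain ⟨τ, hτ⟩ := hpc.joinedIn c h qL (mem_connectedComponentIn hqL)
  have hτK : ∀ u, τ u ∉ K := fun u => connectedComponentIn_subset _ _ (hτ u)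
  let Q : Set ℂ := range fun u => fold (τ u)
  have hQc : IsCompact Q := isCompact_range (fold_cont.comp τ.continuous)
  have hQre : ∀ z ∈ Q, z.re ≤ 0 := by
    rintro _ ⟨u, rfl⟩
    simp only [fold_re]
    exact min_le_right _ _
  have hQK : ∀ z ∈ Q, z.re < 0 → z ∉ K := by
    rintro _ ⟨u, rfl⟩ hz
    simp only [fold_re] at hz
    have h1 : (τ u).re ≤ 0 := by
      by_contra h1
      rw [min_eq_right (not_le.1 h1).le] at hz
      exact lt_irrefl _ hz
    simp only [fold_eq h1]
    exact hτK u
  have h0Q : (0:ℂ) ∉ Q := by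
    rintro ⟨u, hu⟩
    simp only at hu
    apply hτK u
    refine Or.inr (Or.inr (mem_posRay.2 ⟨?_, ?_⟩))
    · have := fold_re (τ u)
      rw [hu, Complex.zero_re] at this
      rw [this]
      exact min_le_left _ _
    · rw [← fold_im, hu, Complex.zero_im]
  let S : Set ℂ := segment ℝ (fold qL) 0
  have hS : ∀ z ∈ S, z.re = 0 ∧ z.im ≤ 0 := by
    rintro z ⟨a, b, ha, hb, hab, rfl⟩
    have e1 : (fold qL).re = 0 := by rw [fold_re, qL_re]; norm_num
    have e2 : (fold qL).im = -(2 * Real.pi) := by rw [fold_im, qL_im]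
    constructor
    · simp [e1]
    · have := Real.pi_pos
      have : 0 ≤ a * (2 * Real.pi) := by positivity
      simp [e2]
      linarith
  have hjoin : JoinedIn (Q ∪ S) c 0 := by
    have h1 : JoinedIn (Q ∪ S) (fold c) (fold qL) :=
      ⟨τ.map fold_cont, fun u => Or.inl ⟨u, rfl⟩⟩
    rw [fold_eq (hC.re_neg hc).le] at h1
    exact h1.trans (JoinedIn.of_segment_subset subset_union_right)
  obtain ⟨σ, hσ⟩ := hjoin
  let s' : ℝ → ℂ := fun t => σ.extend t
  have hs'QS : ∀ t, s' t ∈ Q ∪ S := by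
    intro t
    have : σ.extend t ∈ range σ := by
      rw [← σ.extend_range]
      exact ⟨t, rfl⟩
    obtain ⟨u, hu⟩ := this
    change σ.extend t ∈ Q ∪ S
    rw [← hu]
    exact hσ u
  have hpath : AbovePath D C s' := by
    refine ⟨σ.continuous_extend.continuousOn, ?_, ?_, ?_⟩
    · intro u _
      rcases hs'QS u with h1 | h1
      · refine ⟨hQre _ h1, fun h2 => hQK _ h1 (hD.re_neg h2) (Or.inl h2)⟩
      · refine ⟨(hS _ h1).1.le, fun h2 => ?_⟩
        have := hD.re_neg h2
        rw [(hS _ h1).1] at this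
        exact lt_irrefl _ this
    · change σ.extend 0 ∈ C
      rw [σ.extend_zero]
      exact hc
    · exact σ.extend_one
  refine ⟨s', hpath, ?_⟩
  have hd : s 0 ∈ D := hs.2.2.1
  rw [aboveVia_iff hpath hD hC hCD.symm hd]
  -- a sufficient condition for avoiding `C ∪ R'`
  have hav : ∀ z, z ∉ C → z ∉ Q → z ∉ S → z ∉ posRay → z ∈ (C ∪ AboveRay s')ᶜ := by
    rintro z h1 h2 h3 h4 (h | ⟨t, _, rfl⟩ | h)
    · exact h1 h
    · rcases hs'QS t with h | h
      · exact h2 h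
      · exact h3 h
    · exact h4 h
  have h0C : (0:ℂ) ∉ C := fun h => by simpa using hC.re_neg h
  obtain ⟨ε, hε, hb⟩ := Metric.isOpen_iff.1 (hC.closed.union hQc.isClosed).isOpen_compl 0
    (fun h => h.elim h0C h0Q)
  let A1 : Set ℂ := s '' Ico 0 1
  let A2 : Set ℂ := ball 0 ε ∩ {z | z.re < 0}
  let A3 : Set ℂ := ball 0 ε ∩ {z | 0 < z.im}
  have hA1 : IsPreconnected A1 := isPreconnected_Ico.image _ (hs.1.mono Ico_subset_Icc_self)
  have hA2 : IsPreconnected A2 := ((convex_ball _ _).inter (convex_halfSpace_re_lt 0)).isPreconnected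
  have hA3 : IsPreconnected A3 := ((convex_ball _ _).inter (convex_halfSpace_im_gt 0)).isPreconnected
  have hA1s : A1 ⊆ (C ∪ AboveRay s')ᶜ := by
    rintro _ ⟨t, ht, rfl⟩
    have h1 := hs' t ht
    have ht' : t ∈ Icc (0:ℝ) 1 := Ico_subset_Icc_self ht
    refine hav _ (hs.2.1 t ht').2 (fun h => hQK _ h h1 (Or.inr (Or.inl ⟨t, ht', rfl⟩))) ?_ ?_
    · intro h
      rw [(hS _ h).1] at h1
      exact lt_irrefl _ h1
    · intro h
      exact absurd (mem_posRay.1 h).1 (not_le.2 h1)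
  have hA2s : A2 ⊆ (C ∪ AboveRay s')ᶜ := by
    rintro z ⟨hz, h1⟩
    have h1' : z.re < 0 := h1
    refine hav _ (fun h => hb hz (Or.inl h)) (fun h => hb hz (Or.inr h)) ?_ ?_
    · intro h
      rw [(hS _ h).1] at h1'
      exact lt_irrefl _ h1'
    · intro h
      exact absurd (mem_posRay.1 h).1 (not_le.2 h1')
  have hA3s : A3 ⊆ (C ∪ AboveRay s')ᶜ := by
    rintro z ⟨hz, h1⟩
    have h1' : 0 < z.im := h1
    refine hav _ (fun h => hb hz (Or.inl h)) (fun h => hb hz (Or.inr h)) ?_ ?_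
    · intro h
      exact absurd (hS _ h).2 (not_le.2 h1')
    · intro h
      exact h1'.ne' (mem_posRay.1 h).2
  have hA4s : quadrant ⊆ (C ∪ AboveRay s')ᶜ := hpath.quadrant_subset hC
  -- intersections
  obtain ⟨x, hx1, hx2⟩ : (A1 ∩ A2).Nonempty := by
    have h1 : ContinuousWithinAt s (Icc 0 1) 1 := hs.1 1 (by simp)
    have h2 : Tendsto s (𝓝[Ico 0 1] 1) (𝓝 0) := by
      have := h1.mono_left (nhdsWithin_mono _ Ico_subset_Icc_self)
      rwa [hs.2.2.2] at this
    have h3 : (𝓝[Ico (0:ℝ) 1] 1).NeBot := by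
      rw [← mem_closure_iff_nhdsWithin_neBot, closure_Ico (by norm_num)]
      simp
    obtain ⟨t, ht1, ht2⟩ := ((h2.eventually (ball_mem_nhds (0:ℂ) hε)).and
      self_mem_nhdsWithin).exists
    exact ⟨s t, ⟨t, ht2, rfl⟩, ht1, hs' t ht2⟩
  have hball : ∀ a b : ℝ, |a| + |b| < ε → (⟨a, b⟩ : ℂ) ∈ ball (0:ℂ) ε := by
    intro a b hab
    rw [mem_ball_zero_iff]
    exact lt_of_le_of_lt (Complex.norm_le_abs_re_add_abs_im _) hab
  have e4 : |ε / 4| = ε / 4 := abs_of_pos (by positivity)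
  have hy2 : (⟨-(ε / 4), ε / 4⟩ : ℂ) ∈ A2 := by
    refine ⟨hball _ _ ?_, ?_⟩
    · rw [abs_neg, e4]; linarith
    · change -(ε / 4) < 0
      linarith
  have hy3 : (⟨-(ε / 4), ε / 4⟩ : ℂ) ∈ A3 := by
    refine ⟨hball _ _ ?_, ?_⟩
    · rw [abs_neg, e4]; linarith
    · change 0 < ε / 4
      linarith
  have hw3 : (⟨ε / 4, ε / 4⟩ : ℂ) ∈ A3 := by
    refine ⟨hball _ _ ?_, ?_⟩
    · rw [e4]; linarith
    · change 0 < ε / 4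
      linarith
  have hw4 : (⟨ε / 4, ε / 4⟩ : ℂ) ∈ quadrant := by
    constructor
    · change 0 < ε / 4
      linarith
    · change 0 < ε / 4
      linarith
  have hU1 : IsPreconnected (quadrant ∪ A3) := IsPreconnected.union _ hw4 hw3 quadrant_conn hA3
  have hU2 : IsPreconnected ((quadrant ∪ A3) ∪ A2) :=
    IsPreconnected.union (⟨-(ε / 4), ε / 4⟩ : ℂ) (Or.inr hy3) hy2 hU1 hA2
  have hU : IsPreconnected (((quadrant ∪ A3) ∪ A2) ∪ A1) :=
    IsPreconnected.union x (Or.inr hx2) hx1 hU2 hA1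
  refine hU.subset_connectedComponentIn (Or.inl (Or.inl (Or.inl qU_quadrant)))
    (union_subset (union_subset (union_subset hA4s hA3s) hA2s) hA1s) (Or.inr ⟨0, by simp, rfl⟩)

/-- (i) the relation "C lies above D" is independent of the chosen path;
(ii) for any two distinct components of `X̂`, one lies above the other. -/
theorem liesAbove_wellDefined_and_total
    (X : Set ℂ) (hXne : X.Nonempty) (hXcpt : IsCompact X) (hXconn : IsConnected X)
    (hXns : IsConnected Xᶜ) (h0 : (0:ℂ) ∈ frontier X) (hXb : X ⊆ Metric.ball 0 1)
    (C D : Set ℂ) (hC : C ∈ componentsOf (hatSet X)) (hD : D ∈ componentsOf (hatSet X))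
    (hCD : C ≠ D) :
    (∀ s₁ s₂ : ℝ → ℂ, AbovePath C D s₁ → AbovePath C D s₂ →
        (AboveVia C D s₁ ↔ AboveVia C D s₂)) ∧
    (LiesAbove C D ∨ LiesAbove D C) := by
  have h0X : (0:ℂ) ∈ X := hXcpt.isClosed.frontier_subset h0
  have hgood : ∀ E ∈ componentsOf (hatSet X), GoodSet E := by
    rintro E ⟨x, hx, rfl⟩
    have hcl := hatSet_closed hXcpt.isClosed
    refine ⟨?_, isPreconnected_connectedComponentIn,
      hatSet_component_unbounded hXcpt h0X hXconn hx,
      compl_component hcl (hatSet_compl hXcpt h0X hXns hXb) hx, ?_⟩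
    · rw [← closure_subset_iff_isClosed]
      intro z hz
      exact component_closure hx hz
        (hcl.closure_subset_iff.2 (connectedComponentIn_subset _ _) hz)
    · obtain ⟨δ, hδ, h⟩ := hatSet_re hXcpt hXne hXb
      exact ⟨δ, hδ, fun z hz => h z (connectedComponentIn_subset _ _ hz)⟩
  have hCg := hgood C hC
  have hDg := hgood D hD
  have hdisj : Disjoint C D := by
    obtain ⟨x, hx, rfl⟩ := hC
    obtain ⟨y, hy, rfl⟩ := hD
    rw [disjoint_left]
    intro z h1 h2
    exact hCD ((connectedComponentIn_eq h1).trans (connectedComponentIn_eq h2).symm)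
  refine ⟨fun s₁ s₂ h₁ h₂ => ⟨above_indep hCg hDg hdisj h₁ h₂, above_indep hCg hDg hdisj h₂ h₁⟩, ?_⟩
  obtain ⟨s, hs, hs'⟩ := exists_path hCg hDg hdisj
  obtain ⟨c, hc⟩ := hCg.nonempty
  rcases above_or_below hCg hDg hdisj hs hc with h | h
  · exact Or.inl ⟨s, hs, (aboveVia_iff hs hCg hDg hdisj hc).2 h⟩
  · exact Or.inr (below_swap hCg hDg hdisj hs hs' hc h)
end
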